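/- Let p be a prime with p ≡ 1 (mod 3), and let k, n be nonnegative integers. Then (p² − 1)·B_3(p^k·n + p^k − 1) + (p^{2k} − p²)·B_3(n) = (p^{2k} − 1)·B_3(p·n + p − 1). -/

import Mathlib

/-- The hook length of the cell `(i, j)` in a Young diagram `μ`:
arm length + leg length + 1. -/
def YoungDiagram.hookLength (μ : YoungDiagram) (i j : ℕ) : ℕ :=
  μ.rowLen i + μ.colLen j - i - j - 1

/-- A Young diagram (equivalently, a partition) is a 3-core if none of its
hook numbers is divisible by 3. -/
def YoungDiagram.IsThreeCore (μ : YoungDiagram) : Prop :=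
  ∀ c ∈ μ.cells, ¬ (3 ∣ μ.hookLength c.1 c.2)

/-- `a3 n` is the number of 3-core partitions of `n`. -/
noncomputable def a3 (n : ℕ) : ℕ :=
  Nat.card {μ : YoungDiagram // μ.card = n ∧ μ.IsThreeCore}

/-- `A3 n` is the number of partition pairs of `n` in which each partition is a 3-core. -/
noncomputable def A3 (n : ℕ) : ℕ :=
  Nat.card {p : YoungDiagram × YoungDiagram //
    p.1.card + p.2.card = n ∧ p.1.IsThreeCore ∧ p.2.IsThreeCore}

/-- `B3 n` is the number of partition triples of `n` in which each partition is a 3-core. -/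
noncomputable def B3 (n : ℕ) : ℕ :=
  Nat.card {p : YoungDiagram × YoungDiagram × YoungDiagram //
    p.1.card + p.2.1.card + p.2.2.card = n ∧
    p.1.IsThreeCore ∧ p.2.1.IsThreeCore ∧ p.2.2.IsThreeCore}

/-!
The first-column hook lengths of a `3`-core are closed under subtracting `3`, so they are
determined by two numbers `r` and `s` and the core has size `r² + s² + s - r s`. Hence the
`3`-cores of `n` are the Eisenstein integers of norm `3 n + 1` up to units, and their number is
`a₃(n) = ∑_{d ∣ 3 n + 1} χ(d)`, where `χ` is the quadratic character modulo `3`.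

Two convolutions of such divisor sums are evaluated by Liouville's method. Sum a function `f` over
the integer solutions of `a x + b y = N` with `a x > 0` and `b y > 0`, weighted by the signs of `a`
and `b`. The shears `(a, x, b, y) ↦ (a, x + y, b - a, y)` and `(a, x, b, y) ↦ (a - b, x, b, x + y)`
preserve `a x + b y`, and a sign identity expresses the sum as the two sheared sums plus a sum over
the diagonal `x = y`. For indicators of residue classes modulo `3` the sheared sums cancel, and
the diagonal gives `3 A₃(n) = σ(3 n + 2)` and then `B₃(n) = ∑_{d e = n + 1} d² χ(e)`.

The last sum satisfies the Hecke recursion at `p`; for `χ(p) = 1` its characteristic roots are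
`p²` and `1`, which is the theorem.
-/

open Finset

local notation "χ" => legendreSym 3

section YoungDiagrams

variable (μ : YoungDiagram)

theorem lt_colLen_iff_lt_rowLen {i j : ℕ} : i < μ.colLen j ↔ j < μ.rowLen i := by
  rw [← YoungDiagram.mem_iff_lt_colLen, YoungDiagram.mem_iff_lt_rowLen]

theorem youngDiagram_ext_rowLen {μ ν : YoungDiagram} (h : ∀ i, μ.rowLen i = ν.rowLen i) :
    μ = ν := by
  ext ⟨i, j⟩
  rw [YoungDiagram.mem_cells, YoungDiagram.mem_cells, YoungDiagram.mem_iff_lt_rowLen,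
    YoungDiagram.mem_iff_lt_rowLen, h]

theorem exists_youngDiagram_rowLen_eq {f : ℕ → ℕ} (hf : Antitone f) {l : ℕ} (hl : f l = 0) :
    ∃ μ : YoungDiagram, ∀ i, μ.rowLen i = f i := by
  let cells : Finset (ℕ × ℕ) := {c ∈ range l ×ˢ range (f 0) | c.2 < f c.1}
  have mem_cells (c : ℕ × ℕ) : c ∈ cells ↔ c.2 < f c.1 := by
    simp only [cells, mem_filter, mem_product, mem_range, and_iff_right_iff_imp]
    refine fun hc => ⟨lt_of_not_ge fun hlc => ?_, hc.trans_le (hf (Nat.zero_le _))⟩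
    have := hf hlc
    omega
  have isLowerSet : IsLowerSet (cells : Set (ℕ × ℕ)) := fun c d hdc hc => by
    rw [mem_coe, mem_cells] at hc ⊢
    exact (hdc.2.trans_lt hc).trans_le (hf hdc.1)
  refine ⟨⟨cells, isLowerSet⟩, fun i => eq_of_forall_lt_iff fun j => ?_⟩
  rw [← YoungDiagram.mem_iff_lt_rowLen, YoungDiagram.mem_mk, mem_cells]

theorem rowLen_colLen_zero : μ.rowLen (μ.colLen 0) = 0 := by
  simpa using lt_colLen_iff_lt_rowLen μ (i := μ.colLen 0) (j := 0)

theorem exists_youngDiagram_cons {m : ℕ} (hm : μ.rowLen 0 ≤ m) :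
    ∃ ν : YoungDiagram, ν.rowLen 0 = m ∧ ∀ i, ν.rowLen (i + 1) = μ.rowLen i := by
  have antitone_cons : Antitone (fun i => Nat.casesOn i m μ.rowLen : ℕ → ℕ) := by
    refine antitone_nat_of_succ_le fun i => ?_
    cases i with
    | zero => exact hm
    | succ i => exact μ.rowLen_anti i (i + 1) i.le_succ
  obtain ⟨ν, hν⟩ := exists_youngDiagram_rowLen_eq antitone_cons (l := μ.colLen 0 + 1)
    (rowLen_colLen_zero μ)
  exact ⟨ν, hν 0, fun i => hν (i + 1)⟩

/-- The set of hook lengths of the first column of `μ`. It determines `μ`, and it is the beta-set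
(bead configuration) of `μ` with as many beads as `μ` has rows. -/
def firstColumnHooks : Finset ℕ :=
  (range (μ.colLen 0)).image fun i => μ.hookLength i 0

theorem hookLength_zero_add {i : ℕ} (hi : i < μ.colLen 0) :
    μ.hookLength i 0 + i + 1 = μ.rowLen i + μ.colLen 0 := by
  rw [YoungDiagram.hookLength]
  omega

theorem mem_firstColumnHooks {x : ℕ} :
    x ∈ firstColumnHooks μ ↔ ∃ i < μ.colLen 0, x + i + 1 = μ.rowLen i + μ.colLen 0 := by
  simp only [firstColumnHooks, mem_image, mem_range]
  refine exists_congr fun i => and_congr_right fun hi => ?_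
  have := hookLength_zero_add μ hi
  omega

theorem hookLength_zero_strictAntiOn :
    StrictAntiOn (fun i => μ.hookLength i 0) (range (μ.colLen 0)) := by
  intro i hi j hj hij
  rw [coe_range, Set.mem_Iio] at hi hj
  have := hookLength_zero_add μ hi
  have := hookLength_zero_add μ hj
  have := μ.rowLen_anti i j hij.le
  dsimp only
  omega

theorem card_firstColumnHooks : #(firstColumnHooks μ) = μ.colLen 0 := by
  rw [firstColumnHooks, card_image_of_injOn (hookLength_zero_strictAntiOn μ).injOn, card_range]

theorem zero_notMem_firstColumnHooks : 0 ∉ firstColumnHooks μ := by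
  rw [mem_firstColumnHooks]
  rintro ⟨i, hi, h⟩
  have := (lt_colLen_iff_lt_rowLen μ).1 hi
  omega

theorem firstColumnHooks_injective : Function.Injective firstColumnHooks := by
  intro μ ν h
  have colLen_eq : μ.colLen 0 = ν.colLen 0 := by
    rw [← card_firstColumnHooks, h, card_firstColumnHooks]
  have hookLength_eq :
      (fun i : Fin (μ.colLen 0) => μ.hookLength i 0) = fun i : Fin _ => ν.hookLength i 0 := by
    refine (StrictAnti.range_inj (fun i j hij => ?_) fun i j hij => ?_).1 ?_
    · exact hookLength_zero_strictAntiOn μ (by simp) (by simp) hij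
    · exact hookLength_zero_strictAntiOn ν (by simp [← colLen_eq]) (by simp [← colLen_eq]) hij
    · ext x
      simpa [firstColumnHooks, Fin.exists_iff, colLen_eq] using Finset.ext_iff.1 h x
  refine youngDiagram_ext_rowLen fun i => ?_
  by_cases hi : i < μ.colLen 0
  · have := hookLength_zero_add μ hi
    have := hookLength_zero_add ν (colLen_eq ▸ hi)
    have := congr_fun hookLength_eq ⟨i, hi⟩
    dsimp only at this
    omega
  · have := lt_colLen_iff_lt_rowLen μ (i := i) (j := 0)
    have := lt_colLen_iff_lt_rowLen ν (i := i) (j := 0)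
    omega

theorem exists_firstColumnHooks_eq_insert {a : ℕ} (ha : a ≠ 0)
    (h : ∀ x ∈ firstColumnHooks μ, x < a) :
    ∃ ν, firstColumnHooks ν = insert a (firstColumnHooks μ) := by
  have le_a : μ.rowLen 0 + μ.colLen 0 ≤ a ∧ μ.colLen 0 < a := by
    have := lt_colLen_iff_lt_rowLen μ (i := 0) (j := 0)
    rcases Nat.eq_zero_or_pos (μ.colLen 0) with h0 | h0
    · omega
    · have := h _ ((mem_firstColumnHooks μ (x := μ.rowLen 0 + μ.colLen 0 - 1)).2 ⟨0, h0, by omega⟩)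
      omega
  obtain ⟨ν, hν0, hν⟩ := exists_youngDiagram_cons μ (m := a - μ.colLen 0) (by omega)
  have colLen_eq : ν.colLen 0 = μ.colLen 0 + 1 := by
    refine eq_of_forall_lt_iff fun i => ?_
    rw [lt_colLen_iff_lt_rowLen]
    cases i with
    | zero => omega
    | succ i => rw [hν, ← lt_colLen_iff_lt_rowLen, Nat.succ_lt_succ_iff]
  refine ⟨ν, Finset.ext fun x => ?_⟩
  rw [mem_insert, mem_firstColumnHooks, mem_firstColumnHooks, colLen_eq, Nat.exists_lt_succ_left,
    hν0]
  simp only [hν]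
  exact or_congr (by omega) (exists_congr fun i => and_congr_right fun _ => by omega)

theorem exists_firstColumnHooks_eq {B : Finset ℕ} (hB : 0 ∉ B) : ∃ μ, firstColumnHooks μ = B := by
  induction B using Finset.induction_on_max with
  | empty =>
    exact ⟨⊥, by rw [← card_eq_zero, card_firstColumnHooks, YoungDiagram.colLen_eq_card]; rfl⟩
  | insert a B haB ih =>
    rw [mem_insert, not_or] at hB
    obtain ⟨μ, rfl⟩ := ih hB.2
    exact exists_firstColumnHooks_eq_insert μ (Ne.symm hB.1) haB

theorem notMem_firstColumnHooks_iff {x : ℕ} :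
    x ∉ firstColumnHooks μ ↔ ∃ j, x + μ.colLen j = μ.colLen 0 + j := by
  rw [mem_firstColumnHooks]
  constructor
  · intro hx
    have exists_row : ∃ k, μ.rowLen k + μ.colLen 0 ≤ x + k + 1 :=
      ⟨μ.colLen 0, by rw [rowLen_colLen_zero]; omega⟩
    obtain ⟨k, hk, lt_of_lt_k⟩ := Nat.findX exists_row
    have k_le : k ≤ μ.colLen 0 := le_of_not_gt fun hk' => lt_of_lt_k _ hk' (by
      rw [rowLen_colLen_zero]; omega)
    have hk' : μ.rowLen k + μ.colLen 0 ≤ x + k := by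
      rcases k_le.lt_or_eq with hk' | rfl
      · exact Nat.lt_succ_iff.1 (lt_of_le_of_ne hk fun h => hx ⟨k, hk', h.symm⟩)
      · rw [rowLen_colLen_zero]; omega
    refine ⟨x + k - μ.colLen 0, ?_⟩
    suffices μ.colLen (x + k - μ.colLen 0) = k by omega
    refine eq_of_forall_lt_iff fun i => ?_
    rw [lt_colLen_iff_lt_rowLen]
    refine ⟨fun hi => lt_of_not_ge fun hki => ?_, fun hi => ?_⟩
    · have := μ.rowLen_anti k i hki
      omega
    · have := μ.rowLen_anti i (k - 1) (by omega)
      have := lt_of_lt_k (k - 1) (by omega)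
      omega
  · rintro ⟨j, hj⟩ ⟨i, _, hx⟩
    have := lt_colLen_iff_lt_rowLen μ (i := i) (j := j)
    omega

theorem forall_not_dvd_hookLength_iff (t : ℕ) :
    (∀ c ∈ μ.cells, ¬ t ∣ μ.hookLength c.1 c.2) ↔
      ∀ b ∈ firstColumnHooks μ, ∀ x < b, t ∣ b - x → x ∈ firstColumnHooks μ := by
  constructor
  · intro h b hb x hxb hdvd
    by_contra hx
    obtain ⟨j, hj⟩ := (notMem_firstColumnHooks_iff μ).1 hx
    obtain ⟨i, _, hbi⟩ := (mem_firstColumnHooks μ).1 hb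
    have hij := lt_colLen_iff_lt_rowLen μ (i := i) (j := j)
    refine h (i, j) (by rw [YoungDiagram.mem_cells, YoungDiagram.mem_iff_lt_rowLen]; omega) ?_
    rwa [YoungDiagram.hookLength, show μ.rowLen i + μ.colLen j - i - j - 1 = b - x by omega]
  · rintro h ⟨i, j⟩ hc hdvd
    rw [YoungDiagram.mem_cells, YoungDiagram.mem_iff_lt_rowLen] at hc
    have hij := (lt_colLen_iff_lt_rowLen μ).2 hc
    have hcol := μ.colLen_anti 0 j (Nat.zero_le j)
    have hi := hookLength_zero_add μ (hij.trans_le hcol)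
    refine (notMem_firstColumnHooks_iff μ (x := μ.colLen 0 + j - μ.colLen j)).2 ⟨j, by omega⟩
      (h (μ.hookLength i 0) (mem_image_of_mem _ (mem_range.2 (hij.trans_le hcol))) _ (by omega) ?_)
    rwa [YoungDiagram.hookLength, show μ.rowLen i + μ.colLen j - i - j - 1 =
      μ.hookLength i 0 - (μ.colLen 0 + j - μ.colLen j) by omega] at hdvd

theorem card_eq_sum_rowLen : μ.card = ∑ i ∈ range (μ.colLen 0), μ.rowLen i := by
  rw [YoungDiagram.card, card_eq_sum_card_fiberwise (f := Prod.fst) (t := range (μ.colLen 0))]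
  · exact sum_congr rfl fun i _ => (YoungDiagram.rowLen_eq_card μ).symm
  · rintro ⟨i, j⟩ h
    rw [mem_coe, YoungDiagram.mem_cells, YoungDiagram.mem_iff_lt_colLen] at h
    exact mem_coe.2 (mem_range.2 (h.trans_le (μ.colLen_anti 0 j (Nat.zero_le j))))

theorem sum_firstColumnHooks :
    ∑ x ∈ firstColumnHooks μ, x = μ.card + ∑ i ∈ range (μ.colLen 0), i := by
  rw [firstColumnHooks, sum_image (hookLength_zero_strictAntiOn μ).injOn, card_eq_sum_rowLen,
    ← sum_range_reflect fun i => i, ← sum_add_distrib]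
  refine sum_congr rfl fun i hi => ?_
  have := hookLength_zero_add μ (mem_range.1 hi)
  rw [mem_range] at hi
  omega

end YoungDiagrams

section ThreeCores

/-- The set `{1, 4, …, 3r - 2} ∪ {2, 5, …, 3s - 1}`. These are the first-column hook sets of the
3-cores. -/
def threeCoreHooks (r s : ℕ) : Finset ℕ :=
  (range r).image (3 * · + 1) ∪ (range s).image (3 * · + 2)

theorem mem_threeCoreHooks {r s x : ℕ} :
    x ∈ threeCoreHooks r s ↔ x % 3 = 1 ∧ x / 3 < r ∨ x % 3 = 2 ∧ x / 3 < s := by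
  simp only [threeCoreHooks, mem_union, mem_image, mem_range]
  refine or_congr ⟨?_, fun h => ⟨x / 3, by omega⟩⟩ ⟨?_, fun h => ⟨x / 3, by omega⟩⟩ <;>
  · rintro ⟨y, hy, rfl⟩
    omega

theorem disjoint_image_three_mul_add (r s : ℕ) :
    Disjoint ((range r).image (3 * · + 1)) ((range s).image (3 * · + 2)) := by
  simp only [disjoint_left, mem_image]
  rintro _ ⟨x, -, rfl⟩ ⟨y, -, h⟩
  omega

theorem card_threeCoreHooks (r s : ℕ) : #(threeCoreHooks r s) = r + s := by
  rw [threeCoreHooks, card_union_of_disjoint (disjoint_image_three_mul_add r s),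
    card_image_of_injective _ fun a b h => by simpa using h,
    card_image_of_injective _ fun a b h => by simpa using h, card_range, card_range]

theorem sum_threeCoreHooks_add (r s : ℕ) :
    ∑ x ∈ threeCoreHooks r s, x + r * s = r ^ 2 + s ^ 2 + s + ∑ i ∈ range (r + s), i := by
  have two_mul_sum (t c : ℕ) : 2 * ∑ x ∈ range t, (3 * x + c) + 3 * t = 3 * t ^ 2 + 2 * t * c := by
    induction t with
    | zero => simp
    | succ t ih => rw [sum_range_succ]; linarith
  rw [threeCoreHooks, sum_union (disjoint_image_three_mul_add r s),
    sum_image fun a _ b _ h => by simpa using h, sum_image fun a _ b _ h => by simpa using h]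
  have sum_range (t : ℕ) : 2 * ∑ x ∈ range t, x + t = t ^ 2 := by
    induction t with
    | zero => simp
    | succ t ih => rw [sum_range_succ]; linarith
  linarith [two_mul_sum r 1, two_mul_sum s 2, sum_range (r + s)]

theorem exists_forall_mul_add_mem_iff_lt {B : Finset ℕ} {t : ℕ} (ht : 0 < t)
    (hB : ∀ b ∈ B, ∀ x < b, t ∣ b - x → x ∈ B) (c : ℕ) : ∃ r, ∀ x, t * x + c ∈ B ↔ x < r := by
  have exists_notMem : ∃ r, t * r + c ∉ B := by
    by_contra! h
    exact Set.infinite_of_injective_forall_mem (fun x y h => by simpa [ht.ne'] using h) h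
      B.finite_toSet
  obtain ⟨r, hr, mem_of_lt⟩ := Nat.findX exists_notMem
  refine ⟨r, fun x =>
    ⟨fun hx => lt_of_not_ge fun hrx => hr ?_, fun hx => of_not_not (mem_of_lt x hx)⟩⟩
  rcases hrx.lt_or_eq with hrx | rfl
  · have := Nat.mul_lt_mul_of_pos_left hrx ht
    exact hB _ hx _ (by omega) ⟨x - r, by rw [Nat.mul_sub]; omega⟩
  · exact hx

theorem exists_eq_threeCoreHooks {B : Finset ℕ} (h0 : 0 ∉ B)
    (hB : ∀ b ∈ B, ∀ x < b, 3 ∣ b - x → x ∈ B) : ∃ r s, B = threeCoreHooks r s := by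
  obtain ⟨r, hr⟩ := exists_forall_mul_add_mem_iff_lt three_pos hB 1
  obtain ⟨s, hs⟩ := exists_forall_mul_add_mem_iff_lt three_pos hB 2
  refine ⟨r, s, Finset.ext fun x => ?_⟩
  rw [mem_threeCoreHooks, ← hr, ← hs]
  obtain h | h | h : x % 3 = 0 ∨ x % 3 = 1 ∨ x % 3 = 2 := by omega
  · have : x ∉ B := fun hx => h0 <| by
      rcases x.eq_zero_or_pos with rfl | hpos
      · exact hx
      · exact hB x hx 0 hpos (by omega)
    simp [h, this]
  · simp [h, show 3 * (x / 3) + 1 = x by omega]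
  · simp [h, show 3 * (x / 3) + 2 = x by omega]

theorem threeCoreHooks_inj {r s r' s' : ℕ} (h : threeCoreHooks r s = threeCoreHooks r' s') :
    r = r' ∧ s = s' := by
  have mem_iff (x : ℕ) : x ∈ threeCoreHooks r s ↔ x ∈ threeCoreHooks r' s' := by rw [h]
  simp only [mem_threeCoreHooks] at mem_iff
  have := mem_iff (3 * r + 1)
  have := mem_iff (3 * r' + 1)
  have := mem_iff (3 * s + 2)
  have := mem_iff (3 * s' + 2)
  omega

theorem isThreeCore_iff_exists_firstColumnHooks_eq {μ : YoungDiagram} :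
    μ.IsThreeCore ↔ ∃ r s, firstColumnHooks μ = threeCoreHooks r s := by
  rw [YoungDiagram.IsThreeCore, forall_not_dvd_hookLength_iff]
  constructor
  · exact exists_eq_threeCoreHooks (zero_notMem_firstColumnHooks μ)
  · rintro ⟨r, s, h⟩ b hb x hx hdvd
    rw [h, mem_threeCoreHooks] at hb ⊢
    omega

theorem card_add_mul_of_firstColumnHooks_eq {μ : YoungDiagram} {r s : ℕ}
    (h : firstColumnHooks μ = threeCoreHooks r s) : μ.card + r * s = r ^ 2 + s ^ 2 + s := by
  have colLen_eq : μ.colLen 0 = r + s := by rw [← card_firstColumnHooks, h, card_threeCoreHooks]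
  have sum_eq := sum_firstColumnHooks μ
  rw [h, colLen_eq] at sum_eq
  have := sum_threeCoreHooks_add r s
  omega

theorem exists_equiv_isThreeCore :
    ∃ e : ℕ × ℕ ≃ {μ : YoungDiagram // μ.IsThreeCore},
      ∀ v, (e v).1.card + v.1 * v.2 = v.1 ^ 2 + v.2 ^ 2 + v.2 := by
  choose core hcore using fun v : ℕ × ℕ =>
    exists_firstColumnHooks_eq (B := threeCoreHooks v.1 v.2) (by simp [mem_threeCoreHooks])
  refine ⟨.ofBijective
    (fun v => ⟨core v, isThreeCore_iff_exists_firstColumnHooks_eq.2 ⟨_, _, hcore v⟩⟩)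
    ⟨fun v w hvw => ?_, fun ⟨μ, hμ⟩ => ?_⟩, fun v => card_add_mul_of_firstColumnHooks_eq (hcore v)⟩
  · have hooks_eq := congrArg firstColumnHooks (congrArg Subtype.val hvw)
    rw [hcore, hcore] at hooks_eq
    exact Prod.ext_iff.2 (threeCoreHooks_inj hooks_eq)
  · obtain ⟨r, s, h⟩ := isThreeCore_iff_exists_firstColumnHooks_eq.1 hμ
    exact ⟨(r, s), Subtype.ext (firstColumnHooks_injective ((hcore _).trans h.symm))⟩

end ThreeCores

section DirichletConvolution

variable {R : Type*} [CommRing R] {p : ℕ}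

theorem sum_divisorsAntidiagonal_mul_filter_dvd_fst (hp : p ≠ 0) (t : ℕ) (h : ℕ × ℕ → R) :
    ∑ x ∈ (p * t).divisorsAntidiagonal with p ∣ x.1, h x =
      ∑ x ∈ t.divisorsAntidiagonal, h (p * x.1, x.2) := by
  refine sum_nbij' (fun x => (x.1 / p, x.2)) (fun x => (p * x.1, x.2)) ?_ ?_ ?_ ?_ ?_
  · rintro ⟨_, y⟩ hx
    obtain ⟨⟨hxy, ht⟩, x, rfl⟩ := by simpa using hx
    rw [mul_assoc, Nat.mul_right_inj hp] at hxy
    simp_all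
  all_goals simp +contextual [Nat.mul_div_cancel', hp, mul_assoc]

theorem sum_divisorsAntidiagonal_mul_filter_dvd_snd (hp : p ≠ 0) (t : ℕ) (h : ℕ × ℕ → R) :
    ∑ x ∈ (p * t).divisorsAntidiagonal with p ∣ x.2, h x =
      ∑ x ∈ t.divisorsAntidiagonal, h (x.1, p * x.2) := by
  rw [← Nat.map_swap_divisorsAntidiagonal, filter_map, sum_map]
  rw [← Nat.map_swap_divisorsAntidiagonal (n := t), sum_map]
  exact sum_divisorsAntidiagonal_mul_filter_dvd_fst hp t fun x => h x.swap

theorem sum_divisorsAntidiagonal_mul_filter_dvd_dvd (hp : p ≠ 0) (t : ℕ) (h : ℕ × ℕ → R) :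
    ∑ x ∈ (p * t).divisorsAntidiagonal with p ∣ x.1 ∧ p ∣ x.2, h x =
      if p ∣ t then ∑ x ∈ (t / p).divisorsAntidiagonal, h (p * x.1, p * x.2) else 0 := by
  rw [← filter_filter, sum_filter, sum_divisorsAntidiagonal_mul_filter_dvd_fst hp, ← sum_filter]
  split_ifs with ht
  · obtain ⟨s, rfl⟩ := ht
    rw [sum_divisorsAntidiagonal_mul_filter_dvd_snd hp,
      Nat.mul_div_cancel_left s (Nat.pos_of_ne_zero hp)]
  · refine sum_eq_zero fun x hx => absurd ?_ ht
    rw [mem_filter, Nat.mem_divisorsAntidiagonal] at hx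
    exact hx.1.1 ▸ hx.2.mul_left x.1

/-- The Hecke recursion at the primes: `F (p t) = b p * F t - c p * F (t / p)`, the last term being
absent when `p ∤ t`. -/
def SatisfiesHeckeRecursion (F b c : ℕ → R) : Prop :=
  ∀ ⦃p : ℕ⦄, p.Prime → ∀ t ≠ 0, F (p * t) = b p * F t - c p * if p ∣ t then F (t / p) else 0

namespace SatisfiesHeckeRecursion

theorem dirichletConvolution {f g : ℕ → R} (hf : ∀ x y, f (x * y) = f x * f y)
    (hg : ∀ x y, g (x * y) = g x * g y) :
    SatisfiesHeckeRecursion (fun n => ∑ x ∈ n.divisorsAntidiagonal, f x.1 * g x.2)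
      (fun p => f p + g p) fun p => f p * g p := by
  intro p hp t _
  have dvd_or_dvd : {x ∈ (p * t).divisorsAntidiagonal | p ∣ x.1 ∨ p ∣ x.2} =
      (p * t).divisorsAntidiagonal := filter_true_of_mem fun x hx => by
    rw [Nat.mem_divisorsAntidiagonal] at hx
    exact hp.dvd_mul.1 (Dvd.intro t hx.1.symm)
  have inclusion_exclusion := sum_union_inter (s₁ := {x ∈ (p * t).divisorsAntidiagonal | p ∣ x.1})
    (s₂ := {x ∈ (p * t).divisorsAntidiagonal | p ∣ x.2}) (f := fun x => f x.1 * g x.2)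
  rw [← filter_or, ← filter_and, dvd_or_dvd, sum_divisorsAntidiagonal_mul_filter_dvd_dvd hp.ne_zero,
    sum_divisorsAntidiagonal_mul_filter_dvd_fst hp.ne_zero,
    sum_divisorsAntidiagonal_mul_filter_dvd_snd hp.ne_zero] at inclusion_exclusion
  have mul_fst (x : ℕ × ℕ) : f (p * x.1) * g x.2 = f p * (f x.1 * g x.2) := by rw [hf]; ring
  have mul_snd (x : ℕ × ℕ) : f x.1 * g (p * x.2) = g p * (f x.1 * g x.2) := by rw [hg]; ring
  have mul_both (x : ℕ × ℕ) : f (p * x.1) * g (p * x.2) = f p * g p * (f x.1 * g x.2) := by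
    rw [hf, hg]; ring
  simp only [mul_fst, mul_snd, mul_both, ← mul_sum, ← mul_ite_zero] at inclusion_exclusion
  linear_combination inclusion_exclusion

theorem const_mul {F b c : ℕ → R} (hF : SatisfiesHeckeRecursion F b c) (r : R) :
    SatisfiesHeckeRecursion (fun n => r * F n) b c := by
  intro p hp t ht
  dsimp only
  rw [hF hp t ht, ← mul_ite_zero]
  ring

theorem eq_of_one_eq {F G b c : ℕ → R} (hF : SatisfiesHeckeRecursion F b c)
    (hG : SatisfiesHeckeRecursion G b c) (h1 : F 1 = G 1) {n : ℕ} (hn : n ≠ 0) : F n = G n := by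
  induction n using Nat.strong_induction_on with
  | h n ih =>
    rcases eq_or_ne n 1 with rfl | hn1
    · exact h1
    obtain ⟨p, hp, t, rfl⟩ := Nat.exists_prime_and_dvd hn1
    have ht : t ≠ 0 := right_ne_zero_of_mul hn
    have t_lt : t < p * t := lt_mul_left (Nat.pos_of_ne_zero ht) hp.one_lt
    rw [hF hp t ht, hG hp t ht, ih t t_lt ht]
    split_ifs with hpt
    · rw [ih (t / p) ((Nat.div_le_self t p).trans_lt t_lt)
        (Nat.div_ne_zero_iff.2 ⟨hp.ne_zero, Nat.le_of_dvd (Nat.pos_of_ne_zero ht) hpt⟩)]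
    · rfl

theorem prime_pow_add_two {F b c : ℕ → R} (hF : SatisfiesHeckeRecursion F b c) (hp : p.Prime)
    {m : ℕ} (hm : m ≠ 0) (k : ℕ) :
    F (p ^ (k + 2) * m) = b p * F (p ^ (k + 1) * m) - c p * F (p ^ k * m) := by
  have step := hF hp (p * (p ^ k * m)) (by simp [hp.ne_zero, hm])
  rw [if_pos (dvd_mul_right p _), Nat.mul_div_cancel_left _ hp.pos] at step
  rw [pow_succ' p (k + 1), pow_succ' p k, mul_assoc, mul_assoc, step]

end SatisfiesHeckeRecursion

theorem sub_mul_add_eq_of_two_term_recurrence {u : ℕ → R} {α β : R}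
    (hu : ∀ k, u (k + 2) = (α + β) * u (k + 1) - α * β * u k) (k : ℕ) :
    (α - β) * u k + (β * α ^ k - α * β ^ k) * u 0 = (α ^ k - β ^ k) * u 1 := by
  induction k using Nat.twoStepInduction with
  | zero => ring
  | one => ring
  | more k ih₀ ih₁ =>
    rw [hu]
    linear_combination (α + β) * ih₁ - α * β * ih₀

end DirichletConvolution

section EisensteinIntegers

/-- The ring `ℤ[ω]` of Eisenstein integers, where `ω = (1 + √-3) / 2`, so that `ω² = ω - 1`. -/
abbrev EisensteinInt : Type := QuadraticAlgebra ℤ (-1) 1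

theorem eisensteinInt_norm_eq (z : EisensteinInt) :
    z.norm = z.re ^ 2 + z.re * z.im + z.im ^ 2 := by
  rw [QuadraticAlgebra.norm_def]
  ring

theorem intCast_dvd_eisensteinInt_iff {n : ℤ} {z : EisensteinInt} :
    (n : EisensteinInt) ∣ z ↔ n ∣ z.re ∧ n ∣ z.im := by
  rw [← eq_intCast (algebraMap ℤ EisensteinInt), QuadraticAlgebra.algebraMap_dvd_iff]

theorem intCast_norm_eq_mul_star (z : EisensteinInt) : (z.norm : EisensteinInt) = z * star z := by
  rw [← QuadraticAlgebra.algebraMap_norm_eq_mul_star, eq_intCast]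

theorem eisensteinInt_mul_right_injective {w : EisensteinInt} (hw : w.norm ≠ 0) :
    Function.Injective (w * ·) := by
  have : w ∈ nonZeroDivisors EisensteinInt :=
    QuadraticAlgebra.norm_mem_nonZeroDivisors_iff.1 (mem_nonZeroDivisors_of_ne_zero hw)
  exact fun x y h => (mul_cancel_left_mem_nonZeroDivisors this).1 h

theorem finite_setOf_norm_eq (m : ℤ) : {z : EisensteinInt | z.norm = m}.Finite := by
  refine Set.Finite.of_finite_image (f := fun z => (z.re, z.im))
    (((Set.finite_Icc (-(2 * m)) (2 * m)).prod (Set.finite_Icc (-(2 * m)) (2 * m))).subset ?_)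
    fun z _ w _ h => QuadraticAlgebra.ext (congr_arg Prod.fst h) (congr_arg Prod.snd h)
  rintro _ ⟨z, rfl, rfl⟩
  simp only [Set.mem_prod, Set.mem_Icc, ← abs_le, eisensteinInt_norm_eq]
  constructor
  · refine (Int.le_self_sq |z.re|).trans ?_
    rw [sq_abs]
    nlinarith [sq_nonneg (z.re + z.im), sq_nonneg z.im]
  · refine (Int.le_self_sq |z.im|).trans ?_
    rw [sq_abs]
    nlinarith [sq_nonneg (z.re + z.im), sq_nonneg z.re]

/-- The number of Eisenstein integers of norm `m`. -/
noncomputable def normCount (m : ℤ) : ℕ :=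
  {z : EisensteinInt | z.norm = m}.ncard

theorem normCount_one_pos : 0 < normCount 1 :=
  (Set.ncard_pos (finite_setOf_norm_eq 1)).2 ⟨1, map_one _⟩

theorem ncard_norm_eq_and_dvd {w : EisensteinInt} (hw : w.norm ≠ 0) (t : ℤ) :
    {z : EisensteinInt | z.norm = w.norm * t ∧ w ∣ z}.ncard = normCount t := by
  rw [normCount, ← Set.ncard_image_of_injective {z | _ = t} (eisensteinInt_mul_right_injective hw)]
  congr 1
  ext z
  constructor
  · rintro ⟨hz, u, rfl⟩
    rw [map_mul] at hz
    exact ⟨u, mul_left_cancel₀ hw hz, rfl⟩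
  · rintro ⟨u, rfl, rfl⟩
    exact ⟨map_mul QuadraticAlgebra.norm w u, dvd_mul_right w u⟩

theorem ncard_norm_eq_and_natCast_dvd {p : ℕ} (hp : p ≠ 0) (t : ℕ) :
    {z : EisensteinInt | z.norm = (p * t : ℕ) ∧ ((p : ℤ) : EisensteinInt) ∣ z}.ncard =
      if p ∣ t then normCount (t / p : ℕ) else 0 := by
  split_ifs with hpt
  · obtain ⟨s, rfl⟩ := hpt
    rw [Nat.mul_div_cancel_left s (Nat.pos_of_ne_zero hp),
      ← ncard_norm_eq_and_dvd (w := ((p : ℤ) : EisensteinInt)) (by simpa using hp),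
      QuadraticAlgebra.norm_intCast, ← mul_assoc, ← sq, Nat.cast_mul, Nat.cast_pow, Int.cast_id]
  · rw [Set.ncard_eq_zero ((finite_setOf_norm_eq _).subset fun z hz => hz.1)]
    refine Set.eq_empty_of_forall_notMem ?_
    rintro _ ⟨hz, u, rfl⟩
    rw [map_mul, QuadraticAlgebra.norm_intCast, sq, mul_assoc, Nat.cast_mul] at hz
    have hp' : (p : ℤ) ≠ 0 := Nat.cast_ne_zero.2 hp
    exact hpt (Int.natCast_dvd_natCast.1 ⟨u.norm, (mul_left_cancel₀ hp' hz).symm⟩)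

variable {p : ℕ} [Fact p.Prime]

theorem isPrimitiveRoot_three_iff {R : Type*} [CommRing R] [IsDomain R] (h3 : (3 : R) ≠ 0) {z : R} :
    IsPrimitiveRoot z 3 ↔ z ^ 2 + z + 1 = 0 := by
  have : NeZero ((3 : ℕ) : R) := ⟨by exact_mod_cast h3⟩
  rw [← Polynomial.isRoot_cyclotomic_iff, Polynomial.cyclotomic_three]
  simp

theorem exists_isPrimitiveRoot_zmod_iff {m : ℕ} (hm : m ≠ 0) :
    (∃ z : ZMod p, IsPrimitiveRoot z m) ↔ m ∣ p - 1 := by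
  constructor
  · rintro ⟨z, hz⟩
    rw [hz.eq_orderOf]
    exact ZMod.orderOf_dvd_card_sub_one (hz.ne_zero hm)
  · intro h
    obtain ⟨g, hg⟩ := IsCyclic.exists_ofOrder_eq_natCard (α := (ZMod p)ˣ)
    rw [Nat.card_eq_fintype_card, ZMod.card_units] at hg
    refine ⟨(g ^ (orderOf g / m) : (ZMod p)ˣ), IsPrimitiveRoot.coe_units_iff.2 ?_⟩
    rw [IsPrimitiveRoot.iff_orderOf, orderOf_pow_orderOf_div (orderOf_pos g).ne' (hg ▸ h)]

theorem exists_zmod_sq_add_self_add_one_eq_zero_iff (hp3 : p ≠ 3) :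
    (∃ z : ZMod p, z ^ 2 + z + 1 = 0) ↔ p % 3 = 1 := by
  have three_ne_zero : (3 : ZMod p) ≠ 0 := fun h => hp3 <|
    (Nat.prime_dvd_prime_iff_eq Fact.out Nat.prime_three).1 ((ZMod.natCast_eq_zero_iff 3 p).1 h)
  have := (Fact.out : p.Prime).two_le
  simp only [← isPrimitiveRoot_three_iff three_ne_zero]
  rw [exists_isPrimitiveRoot_zmod_iff (by decide)]
  omega

theorem exists_ne_zero_sq_lt_and_eq_mul {n : ℕ} [NeZero n] (hn : ¬ IsSquare n) (z : ZMod n) :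
    ∃ x y : ℤ, (x, y) ≠ 0 ∧ x ^ 2 < n ∧ y ^ 2 < n ∧ (x : ZMod n) = z * y := by
  have sqrt_sq_lt : (n.sqrt : ℤ) ^ 2 < n := by
    rw [sq]
    exact_mod_cast n.sqrt_le.lt_of_ne fun h => hn ⟨_, h.symm⟩
  have sq_lt (a b : ℕ) (ha : a < n.sqrt + 1) (hb : b < n.sqrt + 1) : ((a : ℤ) - b) ^ 2 < n :=
    (sq_le_sq' (by omega) (by omega)).trans_lt sqrt_sq_lt
  obtain ⟨⟨a, b⟩, hab, ⟨a', b'⟩, hab', hne, heq⟩ := exists_ne_map_eq_of_card_lt_of_maps_to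
    (s := range (n.sqrt + 1) ×ˢ range (n.sqrt + 1)) (t := (univ : Finset (ZMod n)))
    (f := fun v => (v.1 : ZMod n) - z * v.2)
    (by simpa [ZMod.card] using n.lt_succ_sqrt) fun _ _ => by simp
  rw [mem_product, mem_range, mem_range] at hab hab'
  refine ⟨a - a', b - b', fun h => hne ?_, sq_lt a a' hab.1 hab'.1, sq_lt b b' hab.2 hab'.2, ?_⟩
  · simpa [sub_eq_zero] using h
  · push_cast
    linear_combination heq

theorem exists_eisensteinInt_norm_eq_prime (hp : p % 3 = 1) : ∃ w : EisensteinInt, w.norm = p := by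
  have prime_p : p.Prime := Fact.out
  obtain ⟨z, hz⟩ := (exists_zmod_sq_add_self_add_one_eq_zero_iff (by omega)).2 hp
  obtain ⟨x, y, hxy, hx, hy, hxzy⟩ :=
    exists_ne_zero_sq_lt_and_eq_mul prime_p.prime.not_isSquare z
  obtain ⟨q, hq⟩ : (p : ℤ) ∣ x ^ 2 + x * y + y ^ 2 := by
    rw [← ZMod.intCast_zmod_eq_zero_iff_dvd]
    push_cast
    rw [hxzy]
    linear_combination (y : ZMod p) ^ 2 * hz
  have norm_pos : 0 < x ^ 2 + x * y + y ^ 2 := by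
    by_contra! h
    have hy0 : y = 0 := by nlinarith [sq_nonneg (2 * x + y)]
    have hx0 : x = 0 := by nlinarith [sq_nonneg (2 * y + x)]
    exact hxy (by rw [hx0, hy0]; rfl)
  have q_pos : 0 < q := pos_of_mul_pos_right (hq ▸ norm_pos) p.cast_nonneg
  have q_lt : q < 3 := by nlinarith [sq_nonneg (x - y)]
  have q_ne_two : q ≠ 2 := by
    rintro rfl
    have not_two_mod_four : ∀ x y : ZMod 4, x ^ 2 + x * y + y ^ 2 ≠ 2 := by decide
    have p_odd := prime_p.eq_two_or_odd
    refine not_two_mod_four x y ?_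
    have : ((p * 2 : ℤ) : ZMod 4) = ((2 : ℤ) : ZMod 4) :=
      (ZMod.intCast_eq_intCast_iff_dvd_sub _ _ 4).2 (by omega)
    rw [← hq] at this
    exact_mod_cast this
  refine ⟨⟨x, y⟩, ?_⟩
  rw [eisensteinInt_norm_eq, hq, show q = 1 by omega, mul_one]

theorem prime_dvd_of_dvd_im_of_dvd_norm {z : EisensteinInt} (him : (p : ℤ) ∣ z.im)
    (hz : (p : ℤ) ∣ z.norm) : ((p : ℤ) : EisensteinInt) ∣ z := by
  rw [eisensteinInt_norm_eq, Int.dvd_add_left (him.pow two_ne_zero),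
    Int.dvd_add_left (him.mul_left _)] at hz
  exact intCast_dvd_eisensteinInt_iff.2 ⟨Int.Prime.dvd_pow' Fact.out hz, him⟩

theorem dvd_eisensteinInt_iff {w z : EisensteinInt} (hw : w.norm = p) :
    w ∣ z ↔ (p : ℤ) ∣ w.re * z.im - w.im * z.re := by
  have w_ne : w.norm ≠ 0 := by simp [hw, (Fact.out : p.Prime).ne_zero]
  have cancel : w ∣ z ↔ ((p : ℤ) : EisensteinInt) ∣ star w * z := by
    rw [← hw, intCast_norm_eq_mul_star, mul_comm w]
    have := eisensteinInt_mul_right_injective (w := star w) (by rwa [QuadraticAlgebra.norm_star])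
    exact ⟨fun h => mul_dvd_mul_left _ h, fun ⟨u, hu⟩ => ⟨u, this (by simpa [mul_assoc] using hu)⟩⟩
  have im_eq : (star w * z).im = w.re * z.im - w.im * z.re := by
    simp
    ring
  rw [cancel, ← im_eq]
  refine ⟨fun h => (intCast_dvd_eisensteinInt_iff.1 h).2, fun h => ?_⟩
  refine prime_dvd_of_dvd_im_of_dvd_norm h ?_
  rw [map_mul, QuadraticAlgebra.norm_star, hw]
  exact dvd_mul_right _ _

theorem star_dvd_eisensteinInt_iff {w z : EisensteinInt} (hw : w.norm = p) :
    star w ∣ z ↔ (p : ℤ) ∣ (w.re + w.im) * z.im + w.im * z.re := by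
  rw [dvd_eisensteinInt_iff (by rwa [QuadraticAlgebra.norm_star])]
  simp

theorem dvd_or_star_dvd_of_prime_dvd_norm {w z : EisensteinInt} (hw : w.norm = p)
    (hz : (p : ℤ) ∣ z.norm) : w ∣ z ∨ star w ∣ z := by
  rw [dvd_eisensteinInt_iff hw, star_dvd_eisensteinInt_iff hw]
  refine Int.Prime.dvd_mul' Fact.out ?_
  have product_eq : (w.re * z.im - w.im * z.re) * ((w.re + w.im) * z.im + w.im * z.re) =
      w.norm * z.im ^ 2 - w.im ^ 2 * z.norm := by
    rw [eisensteinInt_norm_eq, eisensteinInt_norm_eq]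
    ring
  rw [product_eq, hw]
  exact dvd_sub (dvd_mul_right _ _) (hz.mul_left _)

theorem not_prime_dvd_of_norm_eq {w : EisensteinInt} (hw : w.norm = p) :
    ¬ ((p : ℤ) : EisensteinInt) ∣ w := by
  intro h
  have sq_dvd : (p : ℤ) ^ 2 ∣ p := by
    simpa [hw] using map_dvd QuadraticAlgebra.norm h
  have : p ^ 2 ≤ p := Nat.le_of_dvd (Fact.out : p.Prime).pos (by exact_mod_cast sq_dvd)
  nlinarith [(Fact.out : p.Prime).one_lt]

theorem dvd_and_star_dvd_iff {w z : EisensteinInt} (hp3 : p ≠ 3) (hw : w.norm = p) :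
    w ∣ z ∧ star w ∣ z ↔ ((p : ℤ) : EisensteinInt) ∣ z := by
  have p_eq : ((p : ℤ) : EisensteinInt) = w * star w := by rw [← hw, intCast_norm_eq_mul_star]
  have prime_p : Prime (p : ℤ) := Nat.prime_iff_prime_int.1 Fact.out
  refine ⟨fun ⟨hwz, hwz'⟩ => ?_, fun h => ⟨?_, ?_⟩⟩
  · have not_dvd_im : ¬ (p : ℤ) ∣ w.im := fun h =>
      not_prime_dvd_of_norm_eq hw (prime_dvd_of_dvd_im_of_dvd_norm h hw.symm.dvd)
    have not_dvd_three : ¬ (p : ℤ) ∣ 3 := fun h => hp3 <|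
      (Nat.prime_dvd_prime_iff_eq Fact.out Nat.prime_three).1 (by exact_mod_cast h)
    have not_dvd_trace : ¬ (p : ℤ) ∣ 2 * w.re + w.im := fun h => by
      have discr : 3 * w.im ^ 2 = p * 4 - (2 * w.re + w.im) ^ 2 := by
        rw [← hw, eisensteinInt_norm_eq]
        ring
      have : (p : ℤ) ∣ 3 * w.im ^ 2 :=
        discr ▸ dvd_sub (dvd_mul_right _ _) (h.pow two_ne_zero)
      exact (prime_p.dvd_or_dvd this).elim not_dvd_three fun h =>
        not_dvd_im (prime_p.dvd_of_dvd_pow h)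
    have dvd_trace_mul : (p : ℤ) ∣ (2 * w.re + w.im) * z.im := by
      have := dvd_add ((dvd_eisensteinInt_iff hw).1 hwz) ((star_dvd_eisensteinInt_iff hw).1 hwz')
      ring_nf at this ⊢
      exact this
    refine prime_dvd_of_dvd_im_of_dvd_norm
      ((prime_p.dvd_or_dvd dvd_trace_mul).resolve_left not_dvd_trace) ?_
    exact hw ▸ map_dvd QuadraticAlgebra.norm hwz
  · exact (Dvd.intro _ p_eq.symm).trans h
  · exact (Dvd.intro_left _ p_eq.symm).trans h

theorem prime_dvd_of_dvd_norm_of_mod_three_eq_two (hp : p % 3 = 2) {z : EisensteinInt}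
    (hz : (p : ℤ) ∣ z.norm) : ((p : ℤ) : EisensteinInt) ∣ z := by
  refine prime_dvd_of_dvd_im_of_dvd_norm ?_ hz
  by_contra him
  have im_ne : (z.im : ZMod p) ≠ 0 := by rwa [Ne, ZMod.intCast_zmod_eq_zero_iff_dvd]
  rw [← ZMod.intCast_zmod_eq_zero_iff_dvd, eisensteinInt_norm_eq] at hz
  push_cast at hz
  have := (exists_zmod_sq_add_self_add_one_eq_zero_iff (p := p) (by omega)).1
    ⟨z.re / z.im, by field_simp; linear_combination hz⟩
  omega

theorem ncard_norm_eq_prime_mul_and_dvd {w : EisensteinInt} (hw : w.norm = p) (t : ℕ) :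
    {z : EisensteinInt | z.norm = (p * t : ℕ) ∧ w ∣ z}.ncard = normCount t := by
  rw [← ncard_norm_eq_and_dvd (w := w) (by simp [hw, (Fact.out : p.Prime).ne_zero]), hw,
    Nat.cast_mul]

theorem normCount_prime_mul_of_mod_three_eq_one (hp : p % 3 = 1) (t : ℕ) :
    normCount (p * t : ℕ) + (if p ∣ t then normCount (t / p : ℕ) else 0) = 2 * normCount t := by
  obtain ⟨w, hw⟩ := exists_eisensteinInt_norm_eq_prime hp
  have finite (u : EisensteinInt) : {z : EisensteinInt | z.norm = (p * t : ℕ) ∧ u ∣ z}.Finite :=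
    (finite_setOf_norm_eq _).subset fun z hz => hz.1
  have inclusion_exclusion := Set.ncard_union_add_ncard_inter _ _ (finite w) (finite (star w))
  rw [ncard_norm_eq_prime_mul_and_dvd hw,
    ncard_norm_eq_prime_mul_and_dvd (by rwa [QuadraticAlgebra.norm_star]), ← two_mul]
    at inclusion_exclusion
  rw [← inclusion_exclusion, ← ncard_norm_eq_and_natCast_dvd (by omega), normCount]
  congr 2 <;> ext z
  · have : z.norm = (p * t : ℕ) → w ∣ z ∨ star w ∣ z := fun hz =>
      dvd_or_star_dvd_of_prime_dvd_norm hw (by rw [hz, Nat.cast_mul]; exact dvd_mul_right _ _)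
    simp only [Set.mem_union, Set.mem_ofPred_eq]
    tauto
  · simp only [Set.mem_inter_iff, Set.mem_ofPred_eq, ← and_and_left]
    rw [dvd_and_star_dvd_iff (by omega) hw]

theorem normCount_prime_mul_of_mod_three_eq_two (hp : p % 3 = 2) (t : ℕ) :
    normCount (p * t : ℕ) = if p ∣ t then normCount (t / p : ℕ) else 0 := by
  rw [← ncard_norm_eq_and_natCast_dvd (Fact.out : p.Prime).ne_zero, normCount]
  congr 1
  ext z
  refine (and_iff_left_of_imp fun hz => prime_dvd_of_dvd_norm_of_mod_three_eq_two hp ?_).symm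
  rw [hz, Nat.cast_mul]
  exact dvd_mul_right _ _

theorem normCount_three_mul (t : ℕ) : normCount (3 * t : ℕ) = normCount t := by
  have norm_eq : (⟨1, 1⟩ : EisensteinInt).norm = (3 : ℕ) := by rw [eisensteinInt_norm_eq]; norm_num
  rw [← ncard_norm_eq_prime_mul_and_dvd norm_eq t, normCount]
  congr 1
  ext z
  refine (and_iff_left_of_imp fun hz => ?_).symm
  refine (dvd_or_star_dvd_of_prime_dvd_norm norm_eq ?_).elim id fun h => ?_
  · rw [hz, Nat.cast_mul]
    exact dvd_mul_right _ _
  · rw [dvd_eisensteinInt_iff norm_eq]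
    rw [star_dvd_eisensteinInt_iff norm_eq] at h
    push_cast at h ⊢
    omega

theorem legendreSym_three_eq_ite (a : ℤ) :
    χ a = if a % 3 = 1 then 1 else if a % 3 = 2 then -1 else 0 := by
  rw [legendreSym.mod]
  have := Int.emod_nonneg a three_ne_zero
  have := Int.emod_lt_of_pos a three_pos
  push_cast
  interval_cases a % 3 <;> decide

/-- The sum of the Legendre symbols `(d / 3)` over the divisors `d` of `m`. -/
def legendreDivisorSum (m : ℕ) : ℤ := ∑ x ∈ m.divisorsAntidiagonal, χ x.1

theorem satisfiesHeckeRecursion_normCount :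
    SatisfiesHeckeRecursion (fun m : ℕ => (normCount m : ℤ)) (fun p => χ p + 1)
      fun p => χ p * 1 := by
  intro p hp t _
  have : Fact p.Prime := ⟨hp⟩
  dsimp only
  rw [legendreSym_three_eq_ite]
  obtain hp3 | hp3 | hp3 : p % 3 = 0 ∨ p % 3 = 1 ∨ p % 3 = 2 := by omega
  · obtain rfl : p = 3 := ((Nat.prime_dvd_prime_iff_eq Nat.prime_three hp).1 (by omega)).symm
    simpa using normCount_three_mul t
  · have hp3' : (p : ℤ) % 3 = 1 := by omega
    have := normCount_prime_mul_of_mod_three_eq_one hp3 t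
    rw [if_pos hp3']
    split_ifs at this ⊢ <;> omega
  · have hp3' : (p : ℤ) % 3 = 2 := by omega
    have := normCount_prime_mul_of_mod_three_eq_two hp3 t
    simp only [hp3', if_neg (show (2 : ℤ) ≠ 1 by decide), if_true]
    split_ifs at this ⊢ <;> omega

theorem normCount_eq {m : ℕ} (hm : m ≠ 0) :
    (normCount m : ℤ) = normCount 1 * legendreDivisorSum m := by
  have := SatisfiesHeckeRecursion.dirichletConvolution (f := fun d : ℕ => χ d)
    (g := fun _ => (1 : ℤ)) (fun x y => by rw [Nat.cast_mul, legendreSym.mul]) (fun _ _ => rfl)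
  refine (satisfiesHeckeRecursion_normCount.eq_of_one_eq (this.const_mul (normCount 1)) ?_ hm).trans
    ?_ <;> simp [legendreDivisorSum]

end EisensteinIntegers

section CorePoints

theorem eisensteinInt_norm_eq_one_iff {u : EisensteinInt} :
    u.norm = 1 ↔
      u ∈ ({⟨1, 0⟩, ⟨0, 1⟩, ⟨-1, 1⟩, ⟨-1, 0⟩, ⟨0, -1⟩, ⟨1, -1⟩} : Set EisensteinInt) := by
  obtain ⟨a, b⟩ := u
  simp only [eisensteinInt_norm_eq, Set.mem_insert_iff, Set.mem_singleton_iff,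
    QuadraticAlgebra.mk.injEq]
  refine ⟨fun h => ?_, by rintro (h | h | h | h | h | h) <;> simp [h]⟩
  have : |a| ≤ 1 := sq_le_one_iff_abs_le_one a |>.1 (by nlinarith [sq_nonneg (a + 2 * b)])
  have : |b| ≤ 1 := sq_le_one_iff_abs_le_one b |>.1 (by nlinarith [sq_nonneg (2 * a + b)])
  obtain ⟨_, _⟩ := abs_le.1 ‹|a| ≤ 1›
  obtain ⟨_, _⟩ := abs_le.1 ‹|b| ≤ 1›
  interval_cases a <;> interval_cases b <;> simp at h ⊢

/-- The Eisenstein integer attached to the `3`-core with parameters `v`. These are the elements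
congruent to `1` modulo `√-3` in a sector of angle `2π/3`, so they represent the orbits of the six
units on the elements prime to `3`. -/
def corePoint (v : ℕ × ℕ) : EisensteinInt := ⟨2 * v.2 - v.1 + 1, 2 * v.1 - v.2⟩

theorem norm_corePoint (v : ℕ × ℕ) :
    (corePoint v).norm = 3 * (v.1 ^ 2 + v.2 ^ 2 + v.2 - v.1 * v.2) + 1 := by
  rw [eisensteinInt_norm_eq, corePoint]
  ring

theorem corePoint_injective : Function.Injective corePoint := by
  rintro ⟨r, s⟩ ⟨r', s'⟩ h
  simp only [corePoint, QuadraticAlgebra.mk.injEq] at h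
  simp only [Prod.mk.injEq]
  omega

theorem mem_range_corePoint_iff {z : EisensteinInt} :
    z ∈ Set.range corePoint ↔
      (z.re - z.im) % 3 = 1 ∧ 0 < z.re + 2 * z.im ∧ 1 < 2 * z.re + z.im := by
  constructor
  · rintro ⟨v, rfl⟩
    dsimp only [corePoint]
    omega
  · rintro ⟨hmod, hr, hs⟩
    refine ⟨(((z.re + 2 * z.im) / 3).toNat, ((2 * z.re + z.im) / 3).toNat), ?_⟩
    ext <;> dsimp only [corePoint] <;> omega

theorem eq_one_of_mul_corePoint_mem_range {u : EisensteinInt} (hu : u.norm = 1) {v : ℕ × ℕ}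
    (h : u * corePoint v ∈ Set.range corePoint) : u = 1 := by
  have hv := mem_range_corePoint_iff.1 (Set.mem_range_self v)
  rw [mem_range_corePoint_iff] at h
  rcases eisensteinInt_norm_eq_one_iff.1 hu with rfl | rfl | rfl | rfl | rfl | rfl
  · rfl
  all_goals
    simp only [QuadraticAlgebra.re_mul, QuadraticAlgebra.im_mul] at h
    omega

theorem exists_mul_mem_range_corePoint_of_mod {z : EisensteinInt} (hz : (z.re - z.im) % 3 = 1) :
    ∃ u : EisensteinInt, u.norm = 1 ∧ u * z ∈ Set.range corePoint := by
  by_contra! h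
  have h₁ := h ⟨1, 0⟩ (by simp [eisensteinInt_norm_eq])
  have h₂ := h ⟨-1, 1⟩ (by simp [eisensteinInt_norm_eq])
  have h₃ := h ⟨0, -1⟩ (by simp [eisensteinInt_norm_eq])
  simp only [mem_range_corePoint_iff, QuadraticAlgebra.re_mul, QuadraticAlgebra.im_mul]
    at h₁ h₂ h₃
  omega

theorem exists_mul_mem_range_corePoint {z : EisensteinInt} (hz : z.norm % 3 = 1) :
    ∃ u : EisensteinInt, u.norm = 1 ∧ u * z ∈ Set.range corePoint := by
  have not_dvd : ¬ (3 : ℤ) ∣ z.re - z.im := fun ⟨q, hq⟩ => by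
    have : z.norm = 3 * (z.im ^ 2 + 3 * q * z.im + 3 * q ^ 2) := by
      rw [eisensteinInt_norm_eq, show z.re = z.im + 3 * q by omega]
      ring
    omega
  obtain hmod | hmod : (z.re - z.im) % 3 = 1 ∨ ((-z).re - (-z).im) % 3 = 1 := by
    rw [QuadraticAlgebra.re_neg, QuadraticAlgebra.im_neg]
    omega
  · exact exists_mul_mem_range_corePoint_of_mod hmod
  · obtain ⟨u, hu, huz⟩ := exists_mul_mem_range_corePoint_of_mod hmod
    exact ⟨-u, by rwa [QuadraticAlgebra.norm_neg], by rwa [neg_mul_comm]⟩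

theorem injOn_mul_corePoint :
    Set.InjOn (fun x : EisensteinInt × (ℕ × ℕ) => x.1 * corePoint x.2) {x | x.1.norm = 1} := by
  rintro ⟨u, v⟩ hu ⟨u', v'⟩ hu' h
  dsimp only [Set.mem_ofPred_eq] at hu hu' h
  have star_mul_self : star u' * u' = 1 := by
    rw [mul_comm, ← intCast_norm_eq_mul_star, hu', Int.cast_one]
  have star_mul_eq_one : star u' * u = 1 := by
    refine eq_one_of_mul_corePoint_mem_range (v := v)
      (by rw [map_mul, QuadraticAlgebra.norm_star, hu, hu', mul_one]) ⟨v', ?_⟩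
    rw [mul_assoc, h, ← mul_assoc, star_mul_self, one_mul]
  have star_injective := eisensteinInt_mul_right_injective (w := star u')
    (by rw [QuadraticAlgebra.norm_star, hu']; exact one_ne_zero)
  obtain rfl : u = u' := star_injective (star_mul_eq_one.trans star_mul_self.symm)
  rw [corePoint_injective (eisensteinInt_mul_right_injective (by rw [hu]; exact one_ne_zero) h)]

theorem normCount_three_mul_add_one (n : ℕ) :
    normCount (3 * n + 1 : ℕ) =
      normCount 1 * {v : ℕ × ℕ | n + v.1 * v.2 = v.1 ^ 2 + v.2 ^ 2 + v.2}.ncard := by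
  have norm_corePoint_eq_iff (v : ℕ × ℕ) : (corePoint v).norm = (3 * n + 1 : ℕ) ↔
      n + v.1 * v.2 = v.1 ^ 2 + v.2 ^ 2 + v.2 := by
    rw [norm_corePoint]
    zify
    constructor <;> intro h <;> linarith
  rw [normCount, normCount, ← Set.ncard_prod,
    ← (injOn_mul_corePoint.mono fun x hx => hx.1).ncard_image]
  congr 1
  ext z
  simp only [Set.mem_image, Set.mem_prod, Set.mem_ofPred_eq, ← norm_corePoint_eq_iff]
  constructor
  · intro hz
    obtain ⟨u, hu, v, hv⟩ := exists_mul_mem_range_corePoint (z := z) (by rw [hz]; omega)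
    refine ⟨(star u, v), ⟨by rw [QuadraticAlgebra.norm_star, hu], ?_⟩, ?_⟩
    · rw [hv, map_mul, hu, one_mul, hz]
    · rw [hv, ← mul_assoc, mul_comm (star u), ← intCast_norm_eq_mul_star, hu, Int.cast_one, one_mul]
  · rintro ⟨x, ⟨hu, hv⟩, rfl⟩
    rw [map_mul, hu, hv, one_mul]

theorem ncard_core_parameters_eq (n : ℕ) :
    ({v : ℕ × ℕ | n + v.1 * v.2 = v.1 ^ 2 + v.2 ^ 2 + v.2}.ncard : ℤ) =
      legendreDivisorSum (3 * n + 1) := by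
  have count := normCount_eq (3 * n).succ_ne_zero
  rw [Nat.succ_eq_add_one, normCount_three_mul_add_one, Nat.cast_mul] at count
  exact mul_left_cancel₀ (Nat.cast_ne_zero.2 normCount_one_pos.ne') count

end CorePoints

section SignedConvolution

/-- The common sign of two nonzero integers, and `0` if their product is not positive. -/
def commonSign (u : ℤ × ℤ) : ℤ := if 0 < u.1 * u.2 then u.1.sign else 0

theorem commonSign_of_pos {u : ℤ × ℤ} (hu : 0 < u.1 * u.2) : commonSign u = u.1.sign :=
  if_pos hu

theorem commonSign_swap (u : ℤ × ℤ) : commonSign u.swap = commonSign u := by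
  obtain ⟨a, x⟩ := u
  simp only [commonSign, Prod.swap, mul_comm x a]
  refine if_ctx_congr Iff.rfl (fun h => ?_) fun _ => rfl
  rcases pos_and_pos_or_neg_and_neg_of_mul_pos h with ⟨ha, hx⟩ | ⟨ha, hx⟩
  · rw [Int.sign_eq_one_of_pos ha, Int.sign_eq_one_of_pos hx]
  · rw [Int.sign_eq_neg_one_of_neg ha, Int.sign_eq_neg_one_of_neg hx]

theorem commonSign_neg (u : ℤ × ℤ) : commonSign (-u) = -commonSign u := by
  simp only [commonSign, Prod.fst_neg, Prod.snd_neg, neg_mul_neg, Int.sign_neg]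
  split_ifs
  · rfl
  · rw [neg_zero]

theorem two_mul_commonSign {a x : ℤ} (ha : a ≠ 0) (hx : x ≠ 0) :
    2 * commonSign (a, x) = a.sign + x.sign := by
  rcases ha.lt_or_gt with ha | ha <;> rcases hx.lt_or_gt with hx | hx <;>
    simp [commonSign, Int.sign_eq_one_of_pos, Int.sign_eq_neg_one_of_neg, ha, hx, mul_pos_iff,
      ha.not_gt, hx.not_gt]

theorem sign_mul_sign_add_one_eq {a b : ℤ} (ha : a ≠ 0) (hb : b ≠ 0) :
    a.sign * b.sign + 1 = (a + b).sign * (a.sign + b.sign) := by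
  rcases ha.lt_or_gt with ha | ha <;> rcases hb.lt_or_gt with hb | hb <;>
    simp only [Int.sign_eq_one_of_pos, Int.sign_eq_neg_one_of_neg, ha, hb, add_pos, add_neg] <;>
    norm_num

theorem commonSign_mul_commonSign {a b x y : ℤ} (ha : a ≠ 0) (hb : b ≠ 0) (hx : x ≠ 0)
    (hy : y ≠ 0) (hab : a + b ≠ 0) :
    commonSign (a, x) * commonSign (b, y) =
      commonSign (a, x - y) * commonSign (a + b, y) +
        commonSign (a + b, x) * commonSign (b, y - x) +
        if x = y then commonSign (a, x) * commonSign (b, y) else 0 := by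
  split_ifs with hxy
  · simp [hxy, commonSign]
  have hsub : x - y ≠ 0 := sub_ne_zero.2 hxy
  have hsign : (y - x).sign = -(x - y).sign := by rw [← Int.sign_neg, neg_sub]
  have sign_xy := sign_mul_sign_add_one_eq hx (neg_ne_zero.2 hy)
  rw [Int.sign_neg, ← sub_eq_add_neg] at sign_xy
  refine mul_left_cancel₀ (four_ne_zero (α := ℤ)) ?_
  -- In terms of signs this is `sign_mul_sign_add_one_eq` for `(a, b)` minus the one for `(x, -y)`.
  linear_combination
    (2 * commonSign (b, y)) * two_mul_commonSign ha hx
    + (a.sign + x.sign) * two_mul_commonSign hb hy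
    - (2 * commonSign (a + b, y)) * two_mul_commonSign ha hsub
    - (a.sign + (x - y).sign) * two_mul_commonSign hab hy
    - (2 * commonSign (b, y - x)) * two_mul_commonSign hab hx
    - ((a + b).sign + x.sign) * two_mul_commonSign hb (sub_ne_zero.2 (Ne.symm hxy))
    - ((a + b).sign + x.sign) * hsign + sign_mul_sign_add_one_eq ha hb - sign_xy

/-- The bilinear form `a x + b y` at `v = ((a, x), (b, y))`. -/
def pairing (v : (ℤ × ℤ) × (ℤ × ℤ)) : ℤ := v.1.1 * v.1.2 + v.2.1 * v.2.2

/-- The quadruples `((a, x), (b, y))` of integers with `a x + b y = N` and `a x, b y > 0`. -/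
def signedSolutions (N : ℕ) : Finset ((ℤ × ℤ) × (ℤ × ℤ)) :=
  (antidiagonal N).biUnion fun k => Int.divisorsAntidiag k.1 ×ˢ Int.divisorsAntidiag k.2

variable {N : ℕ}

theorem mem_signedSolutions {v : (ℤ × ℤ) × (ℤ × ℤ)} :
    v ∈ signedSolutions N ↔
      pairing v = N ∧ 0 < v.1.1 * v.1.2 ∧ 0 < v.2.1 * v.2.2 := by
  simp only [signedSolutions, pairing, mem_biUnion, HasAntidiagonal.mem_antidiagonal, mem_product,
    Int.mem_divisorsAntidiag]
  constructor
  · rintro ⟨k, hk, ⟨h₁, h₁'⟩, h₂, h₂'⟩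
    omega
  · rintro ⟨h, h₁, h₂⟩
    exact ⟨((v.1.1 * v.1.2).toNat, (v.2.1 * v.2.2).toNat), by omega, by omega, by omega⟩

/-- The sum of `f` over `signedSolutions N`, weighted by the signs of `a x` and `b y`. -/
def signedConvolution (N : ℕ) (f : (ℤ × ℤ) × (ℤ × ℤ) → ℤ) : ℤ :=
  ∑ v ∈ signedSolutions N, commonSign v.1 * commonSign v.2 * f v

/-- The sum of `g` over the factorisations `a x = m` in integers, weighted by the sign of `a`. -/
def signedDivisorSum (g : ℤ × ℤ → ℤ) (m : ℕ) : ℤ :=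
  ∑ u ∈ Int.divisorsAntidiag m, commonSign u * g u

theorem signedConvolution_add (f g : (ℤ × ℤ) × (ℤ × ℤ) → ℤ) :
    signedConvolution N (fun v => f v + g v) = signedConvolution N f + signedConvolution N g := by
  simp only [signedConvolution, mul_add, sum_add_distrib]

theorem signedConvolution_mul (g h : ℤ × ℤ → ℤ) :
    signedConvolution N (fun v => g v.1 * h v.2) =
      ∑ k ∈ antidiagonal N, signedDivisorSum g k.1 * signedDivisorSum h k.2 := by
  rw [signedConvolution, signedSolutions, sum_biUnion]
  · refine sum_congr rfl fun k _ => ?_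
    rw [sum_product, signedDivisorSum, signedDivisorSum, sum_mul_sum]
    exact sum_congr rfl fun u _ => sum_congr rfl fun v _ => by ring
  · intro k _ l _ hkl
    refine disjoint_left.2 fun v hv hv' => hkl ?_
    simp only [mem_product, Int.mem_divisorsAntidiag] at hv hv'
    ext <;> omega

theorem signedDivisorSum_eq (g : ℤ × ℤ → ℤ) (m : ℕ) :
    signedDivisorSum g m =
      ∑ x ∈ m.divisorsAntidiagonal, (g (x.1, x.2) - g (-x.1, -x.2)) := by
  rw [signedDivisorSum, Int.divisorsAntidiag_natCast]
  simp only [sum_disjUnion, sum_map, ← sum_add_distrib]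
  refine sum_congr rfl fun x hx => ?_
  have pos : 0 < (x.1 : ℤ) * x.2 := by
    obtain ⟨hx, hm⟩ := Nat.mem_divisorsAntidiagonal.1 hx
    exact_mod_cast hx ▸ Nat.pos_of_ne_zero hm
  have sign_eq : (x.1 : ℤ).sign = 1 := Int.sign_eq_one_of_pos (pos_of_mul_pos_left pos (by simp))
  have commonSign_eq : commonSign (x.1, x.2) = 1 := (commonSign_of_pos pos).trans sign_eq
  have commonSign_neg_eq : commonSign (-x.1, -x.2) = -1 :=
    (commonSign_neg (x.1, x.2)).trans (by rw [commonSign_eq])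
  simp only [Function.Embedding.prodMap, Function.Embedding.coeFn_mk, Prod.map,
    Nat.castEmbedding_apply, Function.Embedding.trans_apply, Equiv.neg_apply, commonSign_eq,
    commonSign_neg_eq]
  ring

theorem signedDivisorSum_comp_neg (g : ℤ × ℤ → ℤ) (m : ℕ) :
    signedDivisorSum (fun u => g (-u)) m = -signedDivisorSum g m := by
  rw [signedDivisorSum, signedDivisorSum, ← sum_neg_distrib]
  refine sum_equiv (Equiv.neg _) (fun u => by simp) fun u _ => ?_
  rw [Equiv.neg_apply, commonSign_neg, neg_mul, neg_neg]

theorem signedDivisorSum_comp_swap (g : ℤ × ℤ → ℤ) (m : ℕ) :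
    signedDivisorSum (fun u => g u.swap) m = signedDivisorSum g m := by
  refine sum_equiv (Equiv.prodComm _ _) (fun u => by simp) fun u _ => ?_
  rw [Equiv.prodComm_apply, commonSign_swap]

theorem signedDivisorSum_eq_zero_of_neg_swap {g : ℤ × ℤ → ℤ} (hg : ∀ u, g (-u.swap) = g u)
    (m : ℕ) : signedDivisorSum g m = 0 := by
  have eq_neg : signedDivisorSum g m = -signedDivisorSum g m := calc
    signedDivisorSum g m = signedDivisorSum (fun u => g (-u.swap)) m := by simp only [hg]
    _ = signedDivisorSum (fun u => g (-u)) m := signedDivisorSum_comp_swap (fun u => g (-u)) m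
    _ = -signedDivisorSum g m := signedDivisorSum_comp_neg g m
  omega

/-- The substitution `(a, x, b, y) ↦ (a, x + y, b - a, y)`, which preserves `a x + b y`. -/
def shearFst : Equiv.Perm ((ℤ × ℤ) × (ℤ × ℤ)) where
  toFun v := ((v.1.1, v.1.2 + v.2.2), (v.2.1 - v.1.1, v.2.2))
  invFun v := ((v.1.1, v.1.2 - v.2.2), (v.1.1 + v.2.1, v.2.2))
  left_inv v := by simp
  right_inv v := by simp

theorem pairing_shearFst_symm (v : (ℤ × ℤ) × (ℤ × ℤ)) :
    pairing (shearFst.symm v) = pairing v := by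
  simp only [pairing, shearFst, Equiv.coe_fn_symm_mk]
  ring

/-- The substitution `(a, x, b, y) ↦ (a - b, x, b, x + y)`, which preserves `a x + b y`. -/
def shearSnd : Equiv.Perm ((ℤ × ℤ) × (ℤ × ℤ)) where
  toFun v := ((v.1.1 - v.2.1, v.1.2), (v.2.1, v.1.2 + v.2.2))
  invFun v := ((v.1.1 + v.2.1, v.1.2), (v.2.1, v.2.2 - v.1.2))
  left_inv v := by simp
  right_inv v := by simp

theorem pairing_shearSnd_symm (v : (ℤ × ℤ) × (ℤ × ℤ)) :
    pairing (shearSnd.symm v) = pairing v := by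
  simp only [pairing, shearSnd, Equiv.coe_fn_symm_mk]
  ring

theorem signedConvolution_comp_eq_sum {T : Finset ((ℤ × ℤ) × (ℤ × ℤ))}
    (hT : ∀ v ∈ T, pairing v = N) {e : Equiv.Perm ((ℤ × ℤ) × (ℤ × ℤ))}
    (he : ∀ v, pairing (e.symm v) = pairing v)
    (hsub : (signedSolutions N).map e.toEmbedding ⊆ T) (f : (ℤ × ℤ) × (ℤ × ℤ) → ℤ) :
    signedConvolution N (fun v => f (e v)) =
      ∑ v ∈ T, commonSign (e.symm v).1 * commonSign (e.symm v).2 * f v := by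
  rw [← sum_subset hsub, sum_map, signedConvolution]
  · simp only [Equiv.coe_toEmbedding, Equiv.symm_apply_apply]
  · intro v hvT hv
    rw [mem_map_equiv, mem_signedSolutions, he, hT v hvT] at hv
    rcases not_and_or.1 (fun h => hv ⟨rfl, h⟩) with h | h <;> simp [commonSign, h]

theorem signedConvolution_eq_shear {f : (ℤ × ℤ) × (ℤ × ℤ) → ℤ}
    (hf : ∀ a b x y, a = 0 ∨ b = 0 ∨ x = 0 ∨ y = 0 ∨ a + b = 0 → f ((a, x), (b, y)) = 0) :
    signedConvolution N f =
      signedConvolution N (fun v => f (shearFst v)) +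
        signedConvolution N (fun v => f (shearSnd v)) +
        signedConvolution N fun v => if v.1.2 = v.2.2 then f v else 0 := by
  set T := signedSolutions N ∪ ((signedSolutions N).map shearFst.toEmbedding ∪
    (signedSolutions N).map shearSnd.toEmbedding) with T_def
  have hT (v) (hv : v ∈ T) : pairing v = N := by
    rw [T_def, mem_union, mem_union, mem_map_equiv, mem_map_equiv] at hv
    simp only [mem_signedSolutions, pairing_shearFst_symm, pairing_shearSnd_symm] at hv
    tauto
  have sum_id (g : (ℤ × ℤ) × (ℤ × ℤ) → ℤ) :
      signedConvolution N g = ∑ v ∈ T, commonSign v.1 * commonSign v.2 * g v :=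
    signedConvolution_comp_eq_sum hT (e := Equiv.refl _) (fun _ => rfl)
      (by rw [Equiv.refl_toEmbedding, map_refl]; exact subset_union_left) g
  rw [signedConvolution_comp_eq_sum hT pairing_shearFst_symm
      (subset_union_left.trans subset_union_right),
    signedConvolution_comp_eq_sum hT pairing_shearSnd_symm
      (subset_union_right.trans subset_union_right), sum_id f, sum_id, ← sum_add_distrib,
    ← sum_add_distrib]
  refine sum_congr rfl ?_
  rintro ⟨⟨a, x⟩, b, y⟩ _
  by_cases h : a = 0 ∨ b = 0 ∨ x = 0 ∨ y = 0 ∨ a + b = 0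
  · simp [hf a b x y h]
  · push Not at h
    obtain ⟨ha, hb, hx, hy, hab⟩ := h
    simp only [shearFst, shearSnd, Equiv.coe_fn_symm_mk]
    have sign_identity := commonSign_mul_commonSign ha hb hx hy hab
    split_ifs at sign_identity ⊢ <;> linear_combination f ((a, x), (b, y)) * sign_identity

theorem sum_signedSolutions_diagonal_pos (hN : N ≠ 0) {f : (ℤ × ℤ) × (ℤ × ℤ) → ℤ}
    (hf : ∀ a b x y, a = 0 ∨ b = 0 → f ((a, x), (b, y)) = 0) :
    ∑ v ∈ signedSolutions N with v.1.2 = v.2.2 ∧ 0 < v.1.2, f v =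
      ∑ x ∈ N.divisorsAntidiagonal, ∑ k ∈ antidiagonal x.1, f ((k.1, x.2), (k.2, x.2)) := by
  have restrict (x : ℕ × ℕ) : ∑ k ∈ antidiagonal x.1, f ((k.1, x.2), (k.2, x.2)) =
      ∑ k ∈ antidiagonal x.1 with 0 < k.1 ∧ 0 < k.2, f ((k.1, x.2), (k.2, x.2)) := by
    refine (sum_filter_of_ne fun k _ hk => ?_).symm
    by_contra h
    exact hk (hf _ _ _ _ (by omega))
  simp only [restrict]
  rw [sum_sigma']
  refine sum_nbij' (fun v => ⟨((v.1.1 + v.2.1).toNat, v.1.2.toNat), (v.1.1.toNat, v.2.1.toNat)⟩)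
    (fun w => ((w.2.1, w.1.2), (w.2.2, w.1.2))) ?_ ?_ ?_ ?_ ?_
  all_goals
    simp only [mem_filter, mem_signedSolutions, pairing, mem_sigma, Nat.mem_divisorsAntidiagonal,
      HasAntidiagonal.mem_antidiagonal, and_imp, Prod.forall, Sigma.forall]
  · intro a x b y hsum ha hb hxy hx
    have := pos_of_mul_pos_left ha hx.le
    have := pos_of_mul_pos_left hb (hxy ▸ hx.le)
    refine ⟨⟨?_, hN⟩, by omega, by omega, by omega⟩
    zify
    rw [Int.toNat_of_nonneg (by omega), Int.toNat_of_nonneg hx.le, ← hsum, ← hxy, add_mul]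
  · rintro c x a b rfl - rfl ha hb
    have : 0 < x := Nat.pos_of_ne_zero (right_ne_zero_of_mul hN)
    refine ⟨⟨?_, by positivity, by positivity⟩, trivial, by positivity⟩
    push_cast
    ring
  on_goal 2 =>
    rintro c x a b - - rfl - -
    rw [← Nat.cast_add]
    simp only [Int.toNat_natCast]
  all_goals
    rintro a x b _ - ha hb rfl hx
    rw [Int.toNat_of_nonneg hx.le, Int.toNat_of_nonneg (pos_of_mul_pos_left ha hx.le).le,
      Int.toNat_of_nonneg (pos_of_mul_pos_left hb hx.le).le]

theorem signedConvolution_diagonal (hN : N ≠ 0) {f : (ℤ × ℤ) × (ℤ × ℤ) → ℤ}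
    (hf : ∀ a b x y, a = 0 ∨ b = 0 → f ((a, x), (b, y)) = 0) :
    signedConvolution N (fun v => if v.1.2 = v.2.2 then f v else 0) =
      ∑ x ∈ N.divisorsAntidiagonal, ∑ k ∈ antidiagonal x.1,
        (f ((k.1, x.2), (k.2, x.2)) + f ((-k.1, -x.2), (-k.2, -x.2))) := by
  have weight_eq (v : (ℤ × ℤ) × (ℤ × ℤ)) (hv : v ∈ signedSolutions N) (hv' : v.1.2 = v.2.2) :
      commonSign v.1 * commonSign v.2 = 1 := by
    obtain ⟨-, h₁, h₂⟩ := mem_signedSolutions.1 hv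
    rw [← commonSign_swap, ← commonSign_swap v.2, commonSign_of_pos (by simpa [mul_comm] using h₁),
      commonSign_of_pos (by simpa [mul_comm] using h₂), Prod.fst_swap, Prod.fst_swap, ← hv',
      ← Int.sign_mul]
    exact Int.sign_eq_one_of_pos (mul_self_pos.2 (right_ne_zero_of_mul h₁.ne'))
  have sum_neg : ∑ v ∈ signedSolutions N with v.1.2 = v.2.2 ∧ ¬ 0 < v.1.2, f v =
      ∑ v ∈ signedSolutions N with v.1.2 = v.2.2 ∧ 0 < v.1.2, f (-v) := by
    refine sum_equiv (Equiv.neg _) (fun v => ?_) fun v _ => by simp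
    simp only [mem_filter, mem_signedSolutions, pairing, Equiv.neg_apply, Prod.fst_neg,
      Prod.snd_neg, neg_mul_neg, neg_inj, Left.neg_pos_iff, not_lt]
    refine and_congr_right fun h => and_congr_right fun _ => ?_
    exact (right_ne_zero_of_mul h.2.1.ne').le_iff_lt
  calc signedConvolution N (fun v => if v.1.2 = v.2.2 then f v else 0)
    _ = ∑ v ∈ signedSolutions N with v.1.2 = v.2.2, f v := by
      rw [signedConvolution, sum_filter]
      refine sum_congr rfl fun v hv => ?_
      split_ifs with h
      · rw [weight_eq v hv h, one_mul]
      · rw [mul_zero]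
    _ = ∑ v ∈ signedSolutions N with v.1.2 = v.2.2 ∧ 0 < v.1.2, f v +
        ∑ v ∈ signedSolutions N with v.1.2 = v.2.2 ∧ 0 < v.1.2, f (-v) := by
      rw [← sum_neg, ← sum_filter_add_sum_filter_not _ (fun v => 0 < v.1.2), filter_filter,
        filter_filter]
    _ = _ := by
      rw [sum_signedSolutions_diagonal_pos hN hf, sum_signedSolutions_diagonal_pos hN
        (f := fun v => f (-v)) fun a b x y h => hf _ _ _ _ (by simpa using h), ← sum_add_distrib]
      simp only [← sum_add_distrib]
      rfl

end SignedConvolution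

section CubicResidues

theorem sum_antidiagonal_mul_add {R : Type*} [AddCommMonoid R] {q r s : ℕ} (hs : s < q)
    {h : ℕ × ℕ → R} (hh : ∀ k, k.1 % q ≠ r → h k = 0) (n : ℕ) :
    ∑ k ∈ antidiagonal (q * n + (r + s)), h k =
      ∑ k ∈ antidiagonal n, h (q * k.1 + r, q * k.2 + s) := by
  have hq : 0 < q := by omega
  symm
  refine sum_of_injOn (fun k => (q * k.1 + r, q * k.2 + s)) ?_ ?_ ?_ fun _ _ => rfl
  · rintro ⟨i, j⟩ - ⟨i', j'⟩ - heq
    simpa [hq.ne'] using heq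
  · rintro ⟨i, j⟩ hk
    simp only [mem_coe, HasAntidiagonal.mem_antidiagonal] at hk ⊢
    rw [← hk]
    ring
  · rintro ⟨i, j⟩ hk hk'
    refine hh _ fun hi => hk' ?_
    rw [HasAntidiagonal.mem_antidiagonal] at hk
    dsimp only at hk hi
    have i_eq : q * (i / q) + r = i := hi ▸ Nat.div_add_mod i q
    have le : i / q ≤ n := by
      refine Nat.lt_add_one_iff.1 (lt_of_mul_lt_mul_left ?_ q.zero_le)
      rw [mul_add]
      omega
    refine ⟨(i / q, n - i / q), ?_, ?_⟩
    · simpa using Nat.add_sub_cancel' le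
    · have := Nat.mul_sub q n (i / q)
      have := Nat.mul_le_mul_left q le
      simp only [Prod.mk.injEq]
      omega

theorem sum_antidiagonal_fst_mod_three_eq {r : ℕ} (hr : r < 3) (c : ℕ) :
    ∑ k ∈ antidiagonal c, (if k.1 % 3 = r then 1 else 0 : ℤ) =
      (c + 1) / 3 + if r < (c + 1) % 3 then 1 else 0 := by
  have count := Nat.count_modEq_card (c + 1) (r := 3) (by decide) r
  rw [Nat.mod_eq_of_lt hr, Nat.count_eq_card_filter_range] at count
  simp only [Nat.ModEq, Nat.mod_eq_of_lt hr] at count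
  rw [Nat.sum_antidiagonal_eq_sum_range_succ fun i _ => (if i % 3 = r then 1 else 0 : ℤ), sum_boole,
    count]
  push_cast
  rfl

/-- The indicator function of the pairs congruent to `(r, s)` modulo `3`. -/
def residueIndicator (r s : ℤ) (u : ℤ × ℤ) : ℤ :=
  if u.1 % 3 = r % 3 ∧ u.2 % 3 = s % 3 then 1 else 0

theorem residueIndicator_mul_shearFst (r s t : ℤ) (v : (ℤ × ℤ) × (ℤ × ℤ)) :
    residueIndicator r s (shearFst v).1 * residueIndicator t s (shearFst v).2 =
      residueIndicator r 0 v.1 * residueIndicator (r + t) s v.2 := by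
  obtain ⟨⟨a, x⟩, b, y⟩ := v
  change residueIndicator r s (a, x + y) * residueIndicator t s (b - a, y) = _
  simp only [residueIndicator, mul_boole, ← ite_and]
  exact if_congr (by omega) rfl rfl

theorem residueIndicator_mul_shearSnd (r s t : ℤ) (v : (ℤ × ℤ) × (ℤ × ℤ)) :
    residueIndicator r s (shearSnd v).1 * residueIndicator t s (shearSnd v).2 =
      residueIndicator (r + t) s v.1 * residueIndicator t 0 v.2 := by
  obtain ⟨⟨a, x⟩, b, y⟩ := v
  change residueIndicator r s (a - b, x) * residueIndicator t s (b, x + y) = _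
  simp only [residueIndicator, mul_boole, ← ite_and]
  exact if_congr (by omega) rfl rfl

theorem signedDivisorSum_residueIndicator_one_one (m : ℕ) :
    signedDivisorSum (residueIndicator 1 1) m =
      if m % 3 = 1 then legendreDivisorSum m else 0 := by
  rw [signedDivisorSum_eq, legendreDivisorSum, ← mul_boole, sum_mul]
  refine sum_congr rfl fun x hx => ?_
  have hm : m % 3 = x.1 % 3 * (x.2 % 3) % 3 := by
    rw [← (Nat.mem_divisorsAntidiagonal.1 hx).1, Nat.mul_mod]
  simp only [residueIndicator, legendreSym_three_eq_ite]
  obtain h₁ | h₁ | h₁ : x.1 % 3 = 0 ∨ x.1 % 3 = 1 ∨ x.1 % 3 = 2 := by omega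
  all_goals
    rw [h₁] at hm
    split_ifs <;> omega

theorem signedDivisorSum_fst_mul_residueIndicator_two_one (m : ℕ) :
    signedDivisorSum (fun u => u.1 * residueIndicator 2 1 u) m =
      if m % 3 = 2 then ∑ x ∈ m.divisorsAntidiagonal, (x.1 : ℤ) else 0 := by
  rw [signedDivisorSum_eq, ← mul_boole, sum_mul]
  refine sum_congr rfl fun x hx => ?_
  have hm : m % 3 = x.1 % 3 * (x.2 % 3) % 3 := by
    rw [← (Nat.mem_divisorsAntidiagonal.1 hx).1, Nat.mul_mod]
  simp only [residueIndicator]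
  obtain h₁ | h₁ | h₁ : x.1 % 3 = 0 ∨ x.1 % 3 = 1 ∨ x.1 % 3 = 2 := by omega
  all_goals
    rw [h₁] at hm
    split_ifs <;> omega

theorem signedDivisorSum_residueIndicator_two_one (m : ℕ) :
    signedDivisorSum (residueIndicator 2 1) m = 0 := by
  refine signedDivisorSum_eq_zero_of_neg_swap (fun u => ?_) m
  simp only [residueIndicator, Prod.fst_neg, Prod.snd_neg, Prod.fst_swap, Prod.snd_swap]
  split_ifs <;> omega

theorem signedDivisorSum_residueIndicator_two_zero (m : ℕ) :
    signedDivisorSum (residueIndicator 2 0) m = -signedDivisorSum (residueIndicator 1 0) m := by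
  rw [← signedDivisorSum_comp_neg]
  congr 1
  funext u
  simp only [residueIndicator, Prod.fst_neg, Prod.snd_neg]
  split_ifs <;> omega

theorem sum_legendreSym_snd_eq_zero {m : ℕ} (hm : m % 3 = 2) :
    ∑ x ∈ m.divisorsAntidiagonal, χ x.2 = 0 := by
  have neg_eq : ∑ x ∈ m.divisorsAntidiagonal, χ x.2 = -∑ x ∈ m.divisorsAntidiagonal, χ x.2 := by
    nth_rw 1 [← Nat.map_swap_divisorsAntidiagonal]
    rw [sum_map, ← sum_neg_distrib]
    refine sum_congr rfl fun x hx => ?_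
    have hm' : x.1 % 3 * (x.2 % 3) % 3 = 2 := by
      rw [← Nat.mul_mod, (Nat.mem_divisorsAntidiagonal.1 hx).1, hm]
    simp only [Equiv.coe_toEmbedding, Equiv.prodComm_apply, Prod.snd_swap,
      legendreSym_three_eq_ite]
    obtain h₁ | h₁ | h₁ : x.1 % 3 = 0 ∨ x.1 % 3 = 1 ∨ x.1 % 3 = 2 := by omega
    all_goals
      rw [h₁] at hm'
      split_ifs <;> omega
  omega

theorem diagonal_sum_residueIndicator_one {c x : ℕ} (hcx : c * x % 3 = 2) :
    3 * ∑ k ∈ antidiagonal c,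
      (residueIndicator 1 1 (k.1, x) * residueIndicator 1 1 (k.2, x) +
        residueIndicator 1 1 (-k.1, -x) * residueIndicator 1 1 (-k.2, -x)) = c + χ x := by
  rw [Nat.mul_mod] at hcx
  obtain ⟨hc, hx⟩ | ⟨hc, hx⟩ : c % 3 = 2 ∧ x % 3 = 1 ∨ c % 3 = 1 ∧ x % 3 = 2 := by
    obtain h | h | h : c % 3 = 0 ∨ c % 3 = 1 ∨ c % 3 = 2 := by omega
    all_goals
      rw [h] at hcx
      omega
  all_goals
    have term_eq (k) (hk : k ∈ antidiagonal c) :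
        residueIndicator 1 1 (k.1, x) * residueIndicator 1 1 (k.2, x) +
          residueIndicator 1 1 (-k.1, -x) * residueIndicator 1 1 (-k.2, -x) =
        if k.1 % 3 = x % 3 then 1 else 0 := by
      rw [HasAntidiagonal.mem_antidiagonal] at hk
      simp only [residueIndicator]
      split_ifs <;> omega
    rw [sum_congr rfl term_eq, sum_antidiagonal_fst_mod_three_eq (by omega),
      legendreSym_three_eq_ite]
    split_ifs <;> omega

theorem diagonal_sum_residueIndicator_two (c x : ℕ) :
    3 * ∑ k ∈ antidiagonal c,
      (residueIndicator 1 1 (k.1, x) * residueIndicator 2 1 (k.2, x) * (k.1 + k.2) +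
        residueIndicator 1 1 (-k.1, -x) * residueIndicator 2 1 (-k.2, -x) * (-k.1 + -k.2)) =
      if 3 ∣ c then (c : ℤ) ^ 2 * χ x else 0 := by
  have term_eq (k) (hk : k ∈ antidiagonal c) :
      residueIndicator 1 1 (k.1, x) * residueIndicator 2 1 (k.2, x) * (k.1 + k.2) +
        residueIndicator 1 1 (-k.1, -x) * residueIndicator 2 1 (-k.2, -x) * (-k.1 + -k.2) =
      (if 3 ∣ c then c * χ x else 0) * if k.1 % 3 = x % 3 then 1 else 0 := by
    rw [HasAntidiagonal.mem_antidiagonal] at hk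
    simp only [residueIndicator, legendreSym_three_eq_ite]
    split_ifs <;> omega
  rw [sum_congr rfl term_eq, ← mul_sum, sum_antidiagonal_fst_mod_three_eq (by omega),
    legendreSym_three_eq_ite]
  by_cases hc : 3 ∣ c
  · obtain ⟨d, rfl⟩ := hc
    have div_eq : ((3 * d : ℕ) + 1 : ℤ) / 3 = d := by omega
    rw [if_pos (dvd_mul_right 3 d), if_pos (dvd_mul_right 3 d), div_eq]
    push_cast
    obtain hx | hx : x % 3 = 0 ∨ ¬ x % 3 < (3 * d + 1) % 3 := by omega
    · rw [if_neg (by omega), if_neg (by omega)]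
      ring
    · rw [if_neg hx]
      ring
  · rw [if_neg hc, if_neg hc, zero_mul, mul_zero]

theorem signedConvolution_residueIndicator_one_one (n : ℕ) :
    signedConvolution (3 * n + 2)
        (fun v => residueIndicator 1 1 v.1 * residueIndicator 1 1 v.2) =
      ∑ k ∈ antidiagonal n,
        legendreDivisorSum (3 * k.1 + 1) * legendreDivisorSum (3 * k.2 + 1) := by
  rw [signedConvolution_mul, sum_antidiagonal_mul_add (q := 3) (r := 1) (s := 1) (by decide)]
  · simp [signedDivisorSum_residueIndicator_one_one, Nat.add_mod]
  · intro k hk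
    rw [signedDivisorSum_residueIndicator_one_one, if_neg hk, zero_mul]

theorem three_mul_sum_legendreDivisorSum_mul (n : ℕ) :
    3 * ∑ k ∈ antidiagonal n, legendreDivisorSum (3 * k.1 + 1) * legendreDivisorSum (3 * k.2 + 1) =
      ∑ x ∈ (3 * n + 2).divisorsAntidiagonal, (x.1 : ℤ) := by
  have shearFst_eq : signedConvolution (3 * n + 2)
      (fun v => residueIndicator 1 0 v.1 * residueIndicator 2 1 v.2) = 0 := by
    simp only [signedConvolution_mul, signedDivisorSum_residueIndicator_two_one, mul_zero,
      sum_const_zero]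
  have shearSnd_eq : signedConvolution (3 * n + 2)
      (fun v => residueIndicator 2 1 v.1 * residueIndicator 1 0 v.2) = 0 := by
    simp only [signedConvolution_mul, signedDivisorSum_residueIndicator_two_one, zero_mul,
      sum_const_zero]
  have hf (a b x y : ℤ) (h : a = 0 ∨ b = 0 ∨ x = 0 ∨ y = 0 ∨ a + b = 0) :
      residueIndicator 1 1 (a, x) * residueIndicator 1 1 (b, y) = 0 := by
    simp only [residueIndicator]
    split_ifs <;> omega
  rw [← signedConvolution_residueIndicator_one_one, signedConvolution_eq_shear hf]
  simp only [residueIndicator_mul_shearFst, residueIndicator_mul_shearSnd, Int.reduceAdd,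
    shearFst_eq, shearSnd_eq, zero_add]
  rw [signedConvolution_diagonal (by omega) fun a b x y h => hf a b x y (by tauto), mul_sum]
  calc _ = ∑ x ∈ (3 * n + 2).divisorsAntidiagonal, ((x.1 : ℤ) + χ x.2) :=
        sum_congr rfl fun x hx => diagonal_sum_residueIndicator_one <| by
          rw [(Nat.mem_divisorsAntidiagonal.1 hx).1]
          omega
    _ = _ := by rw [sum_add_distrib, sum_legendreSym_snd_eq_zero (by omega), add_zero]

theorem signedConvolution_residueIndicator_one_two (n : ℕ) :
    signedConvolution (3 * (n + 1))
        (fun v => residueIndicator 1 1 v.1 * residueIndicator 2 1 v.2 * (v.1.1 + v.2.1)) =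
      ∑ k ∈ antidiagonal n, legendreDivisorSum (3 * k.1 + 1) *
        ∑ x ∈ (3 * k.2 + 2).divisorsAntidiagonal, (x.1 : ℤ) := by
  have split_weight (v : (ℤ × ℤ) × (ℤ × ℤ)) :
      residueIndicator 1 1 v.1 * residueIndicator 2 1 v.2 * (v.1.1 + v.2.1) =
        v.1.1 * residueIndicator 1 1 v.1 * residueIndicator 2 1 v.2 +
          residueIndicator 1 1 v.1 * (v.2.1 * residueIndicator 2 1 v.2) := by ring
  simp only [split_weight]
  rw [signedConvolution_add, signedConvolution_mul (fun u => u.1 * residueIndicator 1 1 u),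
    signedConvolution_mul (residueIndicator 1 1) fun u => u.1 * residueIndicator 2 1 u]
  simp only [signedDivisorSum_residueIndicator_two_one, mul_zero, sum_const_zero, zero_add,
    signedDivisorSum_fst_mul_residueIndicator_two_one, signedDivisorSum_residueIndicator_one_one]
  rw [mul_add, sum_antidiagonal_mul_add (q := 3) (r := 1) (s := 2) (by decide)]
  · simp [Nat.add_mod]
  · intro k hk
    rw [if_neg hk, zero_mul]

theorem signedConvolution_shear_cancel (N : ℕ) :
    signedConvolution N (fun v => residueIndicator 1 0 v.1 * residueIndicator 3 1 v.2 * v.2.1) +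
      signedConvolution N (fun v => residueIndicator 3 1 v.1 * residueIndicator 2 0 v.2 * v.1.1) =
      0 := by
  have comm_weight (v : (ℤ × ℤ) × (ℤ × ℤ)) :
      residueIndicator 3 1 v.1 * residueIndicator 2 0 v.2 * v.1.1 =
        residueIndicator 3 1 v.1 * v.1.1 * residueIndicator 2 0 v.2 := mul_right_comm _ _ _
  simp only [comm_weight, mul_assoc (residueIndicator 1 0 _)]
  rw [signedConvolution_mul (residueIndicator 1 0) fun u => residueIndicator 3 1 u * u.1,
    signedConvolution_mul (fun u => residueIndicator 3 1 u * u.1),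
    ← Nat.sum_antidiagonal_swap, ← sum_add_distrib]
  refine sum_eq_zero fun k _ => ?_
  rw [signedDivisorSum_residueIndicator_two_zero, Prod.fst_swap, Prod.snd_swap]
  ring

theorem sum_legendreDivisorSum_mul_sum_divisors (n : ℕ) :
    ∑ k ∈ antidiagonal n, legendreDivisorSum (3 * k.1 + 1) *
        ∑ x ∈ (3 * k.2 + 2).divisorsAntidiagonal, (x.1 : ℤ) =
      3 * ∑ x ∈ (n + 1).divisorsAntidiagonal, (x.1 : ℤ) ^ 2 * χ x.2 := by
  have hf (a b x y : ℤ) (h : a = 0 ∨ b = 0 ∨ x = 0 ∨ y = 0 ∨ a + b = 0) :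
      residueIndicator 1 1 (a, x) * residueIndicator 2 1 (b, y) * (a + b) = 0 := by
    simp only [residueIndicator]
    split_ifs <;> omega
  have fst_add_fst_shearFst (v : (ℤ × ℤ) × (ℤ × ℤ)) :
      (shearFst v).1.1 + (shearFst v).2.1 = v.2.1 := add_sub_cancel _ _
  have fst_add_fst_shearSnd (v : (ℤ × ℤ) × (ℤ × ℤ)) :
      (shearSnd v).1.1 + (shearSnd v).2.1 = v.1.1 := sub_add_cancel _ _
  rw [← signedConvolution_residueIndicator_one_two, signedConvolution_eq_shear hf]
  simp only [residueIndicator_mul_shearFst, residueIndicator_mul_shearSnd, fst_add_fst_shearFst,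
    fst_add_fst_shearSnd, Int.reduceAdd, signedConvolution_shear_cancel, zero_add]
  rw [signedConvolution_diagonal (by omega) fun a b x y h => hf a b x y (by tauto)]
  refine mul_left_cancel₀ (three_ne_zero (α := ℤ)) ?_
  calc _ = ∑ x ∈ (3 * (n + 1)).divisorsAntidiagonal with 3 ∣ x.1, (x.1 : ℤ) ^ 2 * χ x.2 := by
        rw [mul_sum, sum_filter]
        exact sum_congr rfl fun x _ => diagonal_sum_residueIndicator_two x.1 x.2
    _ = _ := by
        rw [sum_divisorsAntidiagonal_mul_filter_dvd_fst three_ne_zero, mul_sum, mul_sum]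
        refine sum_congr rfl fun x _ => ?_
        push_cast
        ring

end CubicResidues

section Counting

/-- A pair whose sizes add up to `n` is a way to split `n` and a pair of elements of the prescribed
sizes. -/
def addFiberEquiv {α β : Type*} (f : α → ℕ) (g : β → ℕ) (n : ℕ) :
    {x : α × β // f x.1 + g x.2 = n} ≃
      Σ k : antidiagonal n, {a // f a = k.1.1} × {b // g b = k.1.2} where
  toFun x := ⟨⟨(f x.1.1, g x.1.2), HasAntidiagonal.mem_antidiagonal.2 x.2⟩, ⟨x.1.1, rfl⟩,
    ⟨x.1.2, rfl⟩⟩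
  invFun y := ⟨(y.2.1.1, y.2.2.1), by
    rw [y.2.1.2, y.2.2.2, HasAntidiagonal.mem_antidiagonal.1 y.1.2]⟩
  left_inv _ := rfl
  right_inv := by
    rintro ⟨⟨⟨i, j⟩, hij⟩, ⟨a, ha⟩, ⟨b, hb⟩⟩
    dsimp only at ha hb
    subst ha hb
    rfl

variable {α β : Type*} {f : α → ℕ} {g : β → ℕ} [∀ m, Finite {a // f a = m}]
  [∀ m, Finite {b // g b = m}]

instance finite_add_fiber (n : ℕ) : Finite {x : α × β // f x.1 + g x.2 = n} :=
  Finite.of_equiv _ (addFiberEquiv f g n).symm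

theorem card_add_fiber (n : ℕ) :
    Nat.card {x : α × β // f x.1 + g x.2 = n} =
      ∑ k ∈ antidiagonal n, Nat.card {a // f a = k.1} * Nat.card {b // g b = k.2} := by
  rw [Nat.card_congr (addFiberEquiv f g n), Nat.card_sigma]
  simp only [Nat.card_prod]
  exact sum_coe_sort _ fun k : ℕ × ℕ => Nat.card {a // f a = k.1} * Nat.card {b // g b = k.2}

end Counting

section CoreCounting

theorem finite_core_parameters (n : ℕ) :
    {v : ℕ × ℕ | n + v.1 * v.2 = v.1 ^ 2 + v.2 ^ 2 + v.2}.Finite := by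
  refine ((Set.finite_Iic (2 * n)).prod (Set.finite_Iic n)).subset ?_
  rintro ⟨r, s⟩ h
  simp only [Set.mem_ofPred_eq] at h
  constructor
  · simp only [Set.mem_Iic]
    zify at h ⊢
    nlinarith [sq_nonneg (2 * (s : ℤ) - r)]
  · simp only [Set.mem_Iic]
    zify at h ⊢
    nlinarith [sq_nonneg (2 * (r : ℤ) - s)]

/-- The size of a `3`-core partition. -/
def coreSize (c : {μ : YoungDiagram // μ.IsThreeCore}) : ℕ := c.1.card

theorem exists_coreSize_fiber_equiv (n : ℕ) :
    Nonempty ({c // coreSize c = n} ≃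
      {v : ℕ × ℕ | n + v.1 * v.2 = v.1 ^ 2 + v.2 ^ 2 + v.2}) := by
  obtain ⟨e, he⟩ := exists_equiv_isThreeCore
  refine ⟨(e.subtypeEquiv fun v => ?_).symm⟩
  rw [Set.mem_ofPred_eq, ← he v, coreSize, add_left_inj, eq_comm]

instance finite_coreSize_fiber (n : ℕ) : Finite {c // coreSize c = n} :=
  have := (finite_core_parameters n).to_subtype
  Finite.of_equiv _ (exists_coreSize_fiber_equiv n).some.symm

theorem a3_eq_card_coreSize_fiber (n : ℕ) : a3 n = Nat.card {c // coreSize c = n} :=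
  Nat.card_congr
    ⟨fun μ => ⟨⟨μ.1, μ.2.2⟩, μ.2.1⟩, fun c => ⟨c.1.1, c.2, c.1.2⟩, fun _ => rfl, fun _ => rfl⟩

theorem A3_eq_card_coreSize_add_fiber (n : ℕ) :
    A3 n = Nat.card {x : _ × _ // coreSize x.1 + coreSize x.2 = n} :=
  Nat.card_congr
    ⟨fun μ => ⟨(⟨μ.1.1, μ.2.2.1⟩, ⟨μ.1.2, μ.2.2.2⟩), μ.2.1⟩,
      fun c => ⟨(c.1.1.1, c.1.2.1), c.2, c.1.1.2, c.1.2.2⟩, fun _ => rfl, fun _ => rfl⟩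

theorem B3_eq_card_coreSize_add_fiber (n : ℕ) :
    B3 n = Nat.card {x : _ × _ × _ // coreSize x.1 + (coreSize x.2.1 + coreSize x.2.2) = n} :=
  Nat.card_congr
    ⟨fun μ => ⟨(⟨μ.1.1, μ.2.2.1⟩, ⟨μ.1.2.1, μ.2.2.2.1⟩, ⟨μ.1.2.2, μ.2.2.2.2⟩),
        (add_assoc _ _ _).symm.trans μ.2.1⟩,
      fun c => ⟨(c.1.1.1, c.1.2.1.1, c.1.2.2.1), (add_assoc _ _ _).trans c.2, c.1.1.2, c.1.2.1.2,
        c.1.2.2.2⟩, fun _ => rfl, fun _ => rfl⟩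

theorem a3_eq_legendreDivisorSum (n : ℕ) : (a3 n : ℤ) = legendreDivisorSum (3 * n + 1) := by
  rw [a3_eq_card_coreSize_fiber, Nat.card_congr (exists_coreSize_fiber_equiv n).some,
    Nat.card_coe_set_eq, ncard_core_parameters_eq]

theorem A3_eq_sum (n : ℕ) : A3 n = ∑ k ∈ antidiagonal n, a3 k.1 * a3 k.2 := by
  simp only [A3_eq_card_coreSize_add_fiber, card_add_fiber, a3_eq_card_coreSize_fiber]

theorem B3_eq_sum (n : ℕ) : B3 n = ∑ k ∈ antidiagonal n, a3 k.1 * A3 k.2 := by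
  rw [B3_eq_card_coreSize_add_fiber,
    card_add_fiber (f := coreSize) (g := fun x : _ × _ => coreSize x.1 + coreSize x.2)]
  simp only [A3_eq_card_coreSize_add_fiber, a3_eq_card_coreSize_fiber]

theorem three_mul_A3 (n : ℕ) :
    (3 * A3 n : ℤ) = ∑ x ∈ (3 * n + 2).divisorsAntidiagonal, (x.1 : ℤ) := by
  rw [← three_mul_sum_legendreDivisorSum_mul, A3_eq_sum]
  push_cast
  simp only [a3_eq_legendreDivisorSum]

theorem B3_eq_sum_sq_mul_legendreSym (n : ℕ) :
    (B3 n : ℤ) = ∑ x ∈ (n + 1).divisorsAntidiagonal, (x.1 : ℤ) ^ 2 * χ x.2 := by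
  refine mul_left_cancel₀ (three_ne_zero (α := ℤ)) ?_
  rw [← sum_legendreDivisorSum_mul_sum_divisors, B3_eq_sum, Nat.cast_sum, mul_sum]
  refine sum_congr rfl fun k _ => ?_
  rw [← a3_eq_legendreDivisorSum, ← three_mul_A3, Nat.cast_mul]
  ring

end CoreCounting

/-- For a prime p ≡ 1 (mod 3) and k, n ≥ 0:
(p²−1)·B₃(pᵏn + pᵏ − 1) + (p²ᵏ−p²)·B₃(n) = (p²ᵏ−1)·B₃(pn + p − 1). -/
theorem B3_rec_one_mod_three (p k n : ℕ) (hp : p.Prime) (hp3 : p % 3 = 1) :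
    ((p : ℤ) ^ 2 - 1) * B3 (p ^ k * n + p ^ k - 1) +
      ((p : ℤ) ^ (2 * k) - (p : ℤ) ^ 2) * B3 n =
    ((p : ℤ) ^ (2 * k) - 1) * B3 (p * n + p - 1) := by
  set F : ℕ → ℤ := fun m => ∑ x ∈ m.divisorsAntidiagonal, (x.1 : ℤ) ^ 2 * χ x.2
  have B3_eq (j : ℕ) : (B3 (p ^ j * n + p ^ j - 1) : ℤ) = F (p ^ j * (n + 1)) := by
    have pos : 0 < p ^ j := pow_pos hp.pos j
    rw [B3_eq_sum_sq_mul_legendreSym, mul_add_one, Nat.sub_add_cancel (by omega)]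
  have hecke : SatisfiesHeckeRecursion F (fun q => (q : ℤ) ^ 2 + χ q) fun q => (q : ℤ) ^ 2 * χ q :=
    .dirichletConvolution (f := fun x => (x : ℤ) ^ 2) (g := fun x => χ x)
      (fun x y => by push_cast; ring) fun x y => by rw [Nat.cast_mul, legendreSym.mul]
  have legendreSym_p : χ p = 1 := by
    rw [legendreSym_three_eq_ite, if_pos (by omega)]
  have recurrence := sub_mul_add_eq_of_two_term_recurrence (u := fun j => F (p ^ j * (n + 1)))
    (fun j => hecke.prime_pow_add_two hp n.succ_ne_zero j) k
  simp only [legendreSym_p, ← B3_eq, one_mul, one_pow, mul_one, ← pow_mul] at recurrence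
  simpa only [pow_zero, pow_one, one_mul, Nat.add_sub_cancel] using recurrence
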